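/- arXiv:math/9902052 — 2 statements merged into one kernel-verified Lean document; each statement's English description precedes it below -/
import Mathlib

section
/- Let u be H-harmonic on B_n. Then sup_{0<r<1} ∫_{S^{n-1}} |u(rζ)| dσ(ζ) < ∞ if and only if there exists a finite signed Borel measure μ on S^{n-1} such that u(x) = ∫_{S^{n-1}} P_h(x,ξ) dμ(ξ) for all x ∈ B_n. -/
/-!
Representation of H-harmonic functions with bounded `L¹` means as Poisson integrals of measures.

**Poisson integrals have bounded means.** By Tonelli and the symmetry `P_h(rζ, ξ) = P_h(rξ, ζ)` it is
enough to know that `∫ P_h(x, ξ) dσ(ξ) = 1`. That integral is H-harmonic in `x` (`hharm_kernel`) and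
rotation invariant, so it is constant on spheres, and the maximum principle (`HHarm.le_of_sphere`)
forces it to be equal to its value at the origin (`integral_Ph_act`).

**Bounded means give a measure.** All integrals over the sphere are replaced by integrals over the
compact group `O(n)` with its Haar probability measure (`lintegral_act`). Fix a unit vector `e`. The
positive and negative parts of `g ↦ u(R g e)` have bounded mass, so along an ultrafilter converging
to `1⁻` they converge weakly to finite measures `νp` and `νm` on `O(n)` (`exists_weak_limit`). Let `v`
be the Poisson integral of the image of `νp - νm` under `g ↦ g e`; the claim is that `u = v`.

The function `u` has no continuous boundary values, so it is first regularized: for `φ` continuous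
on `O(n)`, the average `w(x) = ∫ φ(k) u(k x) dk` is H-harmonic, and the functions `ζ ↦ w(Rζ)` on the
unit sphere are equicontinuous in `R` (`average_equicontinuous`), since a small displacement of `ζ` is
a rotation close to the identity and can be moved to `φ`. Hence the Poisson integral of `w(R ·)` tends
to `w` as `R → 1`, by an approximate identity estimate on the sphere of radius `R` and the maximum
principle inside (`tendsto_poisson_average`). By Fubini that Poisson integral equals the integral of
`u(R g e)` against a continuous function of `g` (`poisson_average_eq`), so its limit is also given by
`νp - νm`, and it is `∫ φ(k) v(k x) dk`. Therefore `∫ φ(k) (u - v)(k x) dk = 0` for all `φ`, and taking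
`φ(k) = (u - v)(k x)` yields `u(x) = v(x)`.
-/

open MeasureTheory Metric Filter Topology Set
open scoped ContDiff ENNReal NNReal

noncomputable section

/-- `E n` is the Euclidean space `ℝⁿ`. -/
abbrev E (n : ℕ) := EuclideanSpace ℝ (Fin n)

/-- The normalized surface measure `σ` on the unit sphere `S^{n-1}` (total mass `1`). -/
noncomputable def sphMeasure (n : ℕ) : Measure (E n) :=
  ((μH[(n : ℝ) - 1] (sphere (0 : E n) 1))⁻¹) • ((μH[(n : ℝ) - 1]).restrict (sphere (0 : E n) 1))

/-- The Euclidean Laplacian `Δu(x) = Σ ∂²u/∂x_i²`. -/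
noncomputable def lap (n : ℕ) (u : E n → ℝ) (x : E n) : ℝ :=
  ∑ i : Fin n, fderiv ℝ (fun y => fderiv ℝ u y (EuclideanSpace.single i 1)) x (EuclideanSpace.single i 1)

/-- The normal derivation operator `Nu(x) = Σ x_i ∂u/∂x_i(x)`, i.e. the derivative of `u`
at `x` in the direction `x`. -/
noncomputable def Nder (n : ℕ) (u : E n → ℝ) (x : E n) : ℝ := fderiv ℝ u x x

/-- `u` is `H`-harmonic on `B_n` :
`Du(x) = (1-|x|²)²Δu(x) + 2(n-2)(1-|x|²)Nu(x) = 0` on the unit ball. -/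
def HHarmonic (n : ℕ) (u : E n → ℝ) : Prop :=
  ∀ x ∈ ball (0 : E n) 1,
    (1 - ‖x‖ ^ 2) ^ 2 * lap n u x + 2 * ((n : ℝ) - 2) * (1 - ‖x‖ ^ 2) * Nder n u x = 0

/-- The hyperbolic Poisson kernel `P_h(x,ξ) = ((1-|x|²)/|x-ξ|²)^{n-1}`. -/
noncomputable def Ph (n : ℕ) (x ξ : E n) : ℝ := ((1 - ‖x‖ ^ 2) / ‖x - ξ‖ ^ 2) ^ (n - 1)

/-- The Euclidean Poisson kernel `P_e(x,ξ) = (1-|x|²)/|x-ξ|ⁿ`. -/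
noncomputable def Pe (n : ℕ) (x ξ : E n) : ℝ := (1 - ‖x‖ ^ 2) / ‖x - ξ‖ ^ n

/-- `u` has a boundary distribution : for every smooth `Φ` on the sphere,
`∫ u(rζ)Φ(ζ)dσ(ζ)` has a finite limit as `r → 1⁻`. -/
def HasBoundaryDistribution (n : ℕ) (u : E n → ℝ) : Prop :=
  ∀ Φ : E n → ℝ, ContDiff ℝ ∞ Φ →
    ∃ L : ℝ, Tendsto (fun r : ℝ => ∫ ζ, u (r • ζ) * Φ ζ ∂(sphMeasure n)) (𝓝[<] (1 : ℝ)) (𝓝 L)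

/-! ### The normalized surface measure is a rotation invariant probability -/

/-- The sphere projects (with Lipschitz constant `1`) onto a set containing the open unit ball of
`ℝᵐ`, whose `m`-dimensional measure is positive. -/
lemma hausdorff_sphere_pos (m : ℕ) : μH[(m : ℝ)] (sphere (0 : E (m + 1)) 1) ≠ 0 := by
  intro h0
  let p : E (m + 1) → (Fin m → ℝ) := fun x i => x i.succ
  have hp : LipschitzWith 1 p := by
    refine LipschitzWith.of_dist_le_mul fun x y => ?_
    rw [NNReal.coe_one, one_mul, dist_pi_le_iff dist_nonneg]
    intro i
    rw [EuclideanSpace.dist_eq, Real.dist_eq]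
    refine Real.le_sqrt_of_sq_le ?_
    rw [← Real.dist_eq]
    exact Finset.single_le_sum (f := fun j => dist (x j) (y j) ^ 2) (fun j _ => sq_nonneg _)
      (Finset.mem_univ i.succ)
  have h1 := hp.hausdorffMeasure_image_le (d := (m : ℝ)) (by positivity) (sphere (0 : E (m + 1)) 1)
  rw [h0, mul_zero] at h1
  have h2 : (μH[(m : ℝ)] : Measure (Fin m → ℝ)) = volume := by
    have := hausdorffMeasure_pi_real (ι := Fin m)
    simpa using this
  have hopen : IsOpen {y : Fin m → ℝ | ∑ i, y i ^ 2 < 1} :=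
    isOpen_lt (by fun_prop) continuous_const
  have hsub : {y : Fin m → ℝ | ∑ i, y i ^ 2 < 1} ⊆ p '' sphere (0 : E (m + 1)) 1 := by
    intro y hy
    have hy' : ∑ i, y i ^ 2 < 1 := hy
    refine ⟨WithLp.toLp 2 (Fin.cons (√(1 - ∑ i, y i ^ 2)) y : Fin (m + 1) → ℝ), ?_, ?_⟩
    · rw [mem_sphere_zero_iff_norm, EuclideanSpace.norm_eq, Fin.sum_univ_succ]
      simp only [Real.norm_eq_abs, sq_abs, Fin.cons_zero, Fin.cons_succ]
      rw [Real.sq_sqrt (by linarith)]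
      simp
    · ext i; simp [p]
  have h3 := hopen.measure_pos (volume : Measure (Fin m → ℝ)) ⟨0, by simp⟩
  rw [← h2] at h3
  exact (h3.trans_le ((measure_mono hsub).trans h1)).ne' rfl

/-- The sphere is covered by the radial projections of the `2(m+1)` faces of the cube
`[-1,1]^{m+1}`; each is a Lipschitz image of a compact cube of `ℝᵐ`. -/
lemma hausdorff_sphere_lt_top (m : ℕ) : μH[(m : ℝ)] (sphere (0 : E (m + 1)) 1) < ⊤ := by
  let v : Fin (m + 1) → Bool → (Fin m → ℝ) → E (m + 1) := fun i s y =>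
    WithLp.toLp 2 (i.insertNth (if s then (1 : ℝ) else -1) y)
  let F : Fin (m + 1) → Bool → (Fin m → ℝ) → E (m + 1) := fun i s y => ‖v i s y‖⁻¹ • v i s y
  have h2 : (μH[(m : ℝ)] : Measure (Fin m → ℝ)) = volume := by
    have := hausdorffMeasure_pi_real (ι := Fin m)
    simpa using this
  have hF : ∀ i s, μH[(m : ℝ)] (F i s '' closedBall 0 1) < ⊤ := by
    intro i s
    have hv : ContDiff ℝ 1 (v i s) := by
      rw [contDiff_euclidean]
      intro j
      refine Fin.succAboveCases i ?_ (fun j => ?_) j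
      · simpa [v] using contDiff_const
      · simpa [v] using contDiff_apply ℝ ℝ j
    have hv0 : ∀ y, v i s y ≠ 0 := by
      intro y h
      have := congrArg (fun z : E (m + 1) => z i) h
      cases s <;> simp [v] at this
    have hFd : ContDiff ℝ 1 (F i s) :=
      ((hv.norm ℝ hv0).inv fun y => norm_ne_zero_iff.2 (hv0 y)).smul hv
    obtain ⟨K, hK⟩ := (hFd.locallyLipschitz.locallyLipschitzOn
      (s := closedBall 0 1)).exists_lipschitzOnWith_of_compact (isCompact_closedBall _ _)
    refine (hK.hausdorffMeasure_image_le (d := (m : ℝ)) (by positivity)).trans_lt ?_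
    rw [h2]
    exact ENNReal.mul_lt_top (by simp) (isCompact_closedBall _ _).measure_lt_top
  have hcov : sphere (0 : E (m + 1)) 1 ⊆ ⋃ i, ⋃ s, F i s '' closedBall 0 1 := by
    intro x hx
    rw [mem_sphere_zero_iff_norm] at hx
    obtain ⟨i, -, hi⟩ := Finset.exists_max_image Finset.univ (fun i => |x i|) ⟨0, Finset.mem_univ _⟩
    have hxi : 0 < |x i| := by
      by_contra! h
      have : x = 0 := by
        ext j
        have := (hi j (Finset.mem_univ j)).trans h
        simpa using this
      simp [this] at hx
    have key : v i (decide (0 ≤ x i)) (fun j => x (i.succAbove j) / |x i|) = |x i|⁻¹ • x := by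
      ext j
      refine Fin.succAboveCases i ?_ (fun j => ?_) j
      · simp only [v, Fin.insertNth_apply_same, PiLp.smul_apply, smul_eq_mul, decide_eq_true_eq]
        split_ifs with h
        · rw [abs_of_nonneg h] at hxi ⊢; field_simp
        · rw [abs_of_neg (not_le.1 h)] at hxi ⊢
          rw [inv_mul_eq_div, div_neg, div_self (by linarith)]
      · simp only [v, Fin.insertNth_apply_succAbove, PiLp.smul_apply, smul_eq_mul]
        ring
    simp only [mem_iUnion]
    refine ⟨i, decide (0 ≤ x i), fun j => x (i.succAbove j) / |x i|, ?_, ?_⟩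
    · rw [mem_closedBall_zero_iff, pi_norm_le_iff_of_nonneg zero_le_one]
      intro j
      rw [Real.norm_eq_abs, abs_div, abs_abs, div_le_one hxi]
      exact hi _ (Finset.mem_univ _)
    · simp only [F, key, norm_smul, hx, smul_smul]
      simp only [norm_inv, Real.norm_eq_abs, abs_abs, mul_one, inv_inv]
      rw [mul_inv_cancel₀ hxi.ne', one_smul]
  refine (measure_mono hcov).trans_lt ((measure_iUnion_le _).trans_lt ?_)
  rw [tsum_fintype]
  refine ENNReal.sum_lt_top.2 fun i _ => (measure_iUnion_le _).trans_lt ?_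
  rw [tsum_fintype]
  exact ENNReal.sum_lt_top.2 fun s _ => hF i s

lemma isProbabilityMeasure_sphMeasure {n : ℕ} (hn : 1 ≤ n) :
    IsProbabilityMeasure (sphMeasure n) := by
  obtain ⟨m, rfl⟩ : ∃ m, n = m + 1 := ⟨n - 1, by omega⟩
  constructor
  have h1 := hausdorff_sphere_pos m
  have h2 := (hausdorff_sphere_lt_top m).ne
  have h3 : ((m + 1 : ℕ) : ℝ) - 1 = m := by push_cast; ring
  simp only [sphMeasure, h3, Measure.smul_apply, Measure.restrict_apply MeasurableSet.univ,
    univ_inter, smul_eq_mul]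
  exact ENNReal.inv_mul_cancel h1 h2

lemma sphMeasure_compl_sphere (n : ℕ) : sphMeasure n (sphere (0 : E n) 1)ᶜ = 0 := by
  simp [sphMeasure, Measure.restrict_apply isClosed_sphere.measurableSet.compl]

lemma map_sphMeasure {n : ℕ} (hn : 1 ≤ n) (g : E n ≃ₗᵢ[ℝ] E n) :
    (sphMeasure n).map g = sphMeasure n := by
  have hd : (0 : ℝ) ≤ (n : ℝ) - 1 := by
    have : (1 : ℝ) ≤ n := by exact_mod_cast hn
    linarith
  rw [sphMeasure, Measure.map_smul]
  congr 1
  have hpre : sphere (0 : E n) 1 = g ⁻¹' sphere (0 : E n) 1 := by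
    ext x; simp
  conv_lhs => rw [hpre]
  rw [← Measure.restrict_map g.continuous.measurable isClosed_sphere.measurableSet]
  have := g.isometry.map_hausdorffMeasure (Or.inl hd)
  rw [this, g.surjective.range_eq, Measure.restrict_univ]

/-! ### The orthogonal group and its Haar measure -/

/-- The orthogonal group `O(n)`, as the unitary elements of the algebra of continuous endomorphisms
of `ℝⁿ`, with the topology given by the operator norm. -/
abbrev OG (n : ℕ) := unitary (E n →L[ℝ] E n)

instance continuousStar_end (n : ℕ) : ContinuousStar (E n →L[ℝ] E n) :=
  ⟨(ContinuousLinearMap.adjoint (𝕜 := ℝ) (E := E n) (F := E n)).continuous⟩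

/-- The linear isometry of `ℝⁿ` attached to an element of `O(n)`. -/
def act {n : ℕ} (k : OG n) : E n ≃ₗᵢ[ℝ] E n := Unitary.linearIsometryEquiv k

instance compactSpace_OG (n : ℕ) : CompactSpace (OG n) := by
  have hK : IsCompact {k : E n →L[ℝ] E n | k ∈ OG n} := ?_
  · exact isCompact_iff_compactSpace.1 hK
  refine Metric.isCompact_of_isClosed_isBounded ?_ ?_
  · exact isClosed_unitary (R := E n →L[ℝ] E n)
  · refine (isBounded_closedBall (x := (0 : E n →L[ℝ] E n)) (r := 1)).subset fun k hk => ?_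
    rw [mem_closedBall_zero_iff]
    refine ContinuousLinearMap.opNorm_le_bound _ zero_le_one fun x => ?_
    have := (act ⟨k, hk⟩).norm_map x
    rw [one_mul]; exact this.le

lemma act_mul {n : ℕ} (g k : OG n) (x : E n) : act (g * k) x = act g (act k x) := by
  simp [act]

lemma act_one {n : ℕ} (x : E n) : act (1 : OG n) x = x := by
  simp [act]

lemma continuous_act (n : ℕ) : Continuous fun p : OG n × E n => act p.1 p.2 := by
  have : Continuous fun p : OG n × E n => ((p.1 : E n →L[ℝ] E n)) p.2 := by fun_prop
  exact this

/-- The normalized Haar measure of `O(n)`. -/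
def haarO (n : ℕ) : Measure (OG n) := Measure.haarMeasure ⊤

instance (n : ℕ) : (haarO n).IsHaarMeasure := by unfold haarO; infer_instance
instance (n : ℕ) : IsProbabilityMeasure (haarO n) := ⟨by
  have := Measure.haarMeasure_self (K₀ := (⊤ : TopologicalSpace.PositiveCompacts (OG n)))
  simpa [haarO] using this⟩

/-- The compact group `O(n)` is unimodular: a right translate of the Haar probability measure is
again a left Haar probability measure, so it is the same. -/
instance (n : ℕ) : (haarO n).IsMulRightInvariant := ⟨fun g => by
  have : IsProbabilityMeasure ((haarO n).map (· * g)) :=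
    Measure.isProbabilityMeasure_map (by fun_prop)
  exact Measure.isHaarMeasure_eq_of_isProbabilityMeasure _ _⟩

/-! ### Transitivity on the sphere and the orbit map -/

lemma continuous_act_left {n : ℕ} (x : E n) : Continuous fun k : OG n => act k x :=
  (continuous_act n).comp (by fun_prop : Continuous fun k : OG n => (k, x))

/-- Transitivity on spheres, by the reflection in the hyperplane orthogonal to `x - y`. -/
lemma exists_act_eq {n : ℕ} (x y : E n) (h : ‖x‖ = ‖y‖) : ∃ g : OG n, act g x = y := by
  refine ⟨Unitary.linearIsometryEquiv.symm (Submodule.reflection (ℝ ∙ (x - y))ᗮ), ?_⟩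
  simp only [act, MulEquiv.apply_symm_apply]
  exact Submodule.reflection_sub h

/-- Rotations moving a unit vector to a nearby one can be chosen close to the identity: the
product of the reflections in the directions `x` and `x + y` moves `x` to `y`. -/
lemma exists_act_eq_of_close {n : ℕ} (x y : E n) (hx : ‖x‖ = 1) (hy : ‖y‖ = 1)
    (hxy : ‖y - x‖ ≤ 1) : ∃ g : OG n, act g x = y ∧ dist g 1 ≤ 4 * ‖y - x‖ := by
  let S : E n → (E n ≃ₗᵢ[ℝ] E n) := fun v => Submodule.reflection (ℝ ∙ v)ᗮ
  have hS : ∀ v z, S v z = z - (2 * (inner ℝ v z / ‖v‖ ^ 2)) • v := by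
    intro v z
    simp only [S, Submodule.reflection_orthogonal_apply, Submodule.reflection_singleton_apply]
    simp only [RCLike.ofReal_real_eq_id, id_eq, neg_sub, mul_smul]
    rw [two_smul, two_smul]
  have h1 : S x x = -x := by
    rw [hS, real_inner_self_eq_norm_sq, hx]; norm_num [two_smul]
  have h2 : S (x + y) (-x) = y := by
    have h3 : S (x + y) (-x) = S (-x - y) (-x) := by
      rw [hS, hS, show -x - y = -(x + y) by abel, inner_neg_left, norm_neg]
      simp only [neg_div, mul_neg, smul_neg, neg_smul, neg_neg]
    rw [h3]
    exact Submodule.reflection_sub (v := -x) (w := y) (by rw [norm_neg, hx, hy])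
  let g : E n ≃ₗᵢ[ℝ] E n := (S x).trans (S (x + y))
  refine ⟨Unitary.linearIsometryEquiv.symm g, ?_, ?_⟩
  · simp [act, g, h1, h2]
  have hd : dist (Unitary.linearIsometryEquiv.symm g) (1 : OG n)
      = ‖((Unitary.linearIsometryEquiv.symm g : OG n) : E n →L[ℝ] E n) - 1‖ := by
    rw [Subtype.dist_eq, dist_eq_norm]; rfl
  rw [hd]
  refine ContinuousLinearMap.opNorm_le_bound _ (by positivity) fun z => ?_
  have e1 : (((Unitary.linearIsometryEquiv.symm g : OG n) : E n →L[ℝ] E n) - 1) z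
      = S (x + y) (S x z) - S x (S x z) := by
    have : S x (S x z) = z := Submodule.reflection_reflection _ _
    rw [this]; rfl
  rw [e1]
  generalize hw : S x z = w
  have hwz : ‖w‖ = ‖z‖ := by rw [← hw]; exact LinearIsometryEquiv.norm_map _ _
  rw [← hwz, hS, hS]
  set d := y - x with hd
  have hv : x + y = (2 : ℝ) • x + d := by rw [hd, two_smul]; abel
  have hxd : inner ℝ x d = - ‖d‖ ^ 2 / 2 := by
    have h3 : ‖x + d‖ ^ 2 = 1 := by rw [hd]; simp [hy]
    rw [norm_add_sq_real, hx] at h3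
    linarith
  have hvn : ‖x + y‖ ^ 2 = 4 - ‖d‖ ^ 2 := by
    rw [hv, norm_add_sq_real, norm_smul, hx, inner_smul_left, hxd]
    simp; ring
  have hpos : 3 ≤ ‖x + y‖ ^ 2 := by
    rw [hvn]; nlinarith [norm_nonneg d]
  have e2 : (w - (2 * (inner ℝ (x + y) w / ‖x + y‖ ^ 2)) • (x + y))
      - (w - (2 * (inner ℝ x w / ‖x‖ ^ 2)) • x)
      = (-2 / ‖x + y‖ ^ 2) • ((‖d‖ ^ 2 * inner ℝ x w) • x + (2 * inner ℝ x w) • d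
        + (2 * inner ℝ d w) • x + inner ℝ d w • d) := by
    have hne : ‖x + y‖ ^ 2 ≠ 0 := by positivity
    rw [hx]
    have : ‖d‖ ^ 2 = 4 - ‖x + y‖ ^ 2 := by rw [hvn]; ring
    rw [this]
    generalize ‖x + y‖ ^ 2 = N at hne
    rw [hv, inner_add_left, inner_smul_left]
    simp only [RCLike.conj_to_real]
    match_scalars <;> field_simp <;> ring
  -- with `d = y - x` the difference of the two reflections is `O(‖d‖)`
  rw [e2, norm_smul]
  have hxw : |inner ℝ x w| ≤ ‖w‖ := by simpa [hx] using abs_real_inner_le_norm x w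
  have hdw : |inner ℝ d w| ≤ ‖d‖ * ‖w‖ := abs_real_inner_le_norm d w
  have e3 : ‖((‖d‖ ^ 2 * inner ℝ x w) • x + (2 * inner ℝ x w) • d
        + (2 * inner ℝ d w) • x + inner ℝ d w • d)‖ ≤ 6 * ‖d‖ * ‖w‖ := by
    refine (norm_add_le _ _).trans ?_
    refine (add_le_add_left (norm_add_le _ _) _).trans ?_
    refine (add_le_add_left (add_le_add_left (norm_add_le _ _) _) _).trans ?_
    simp only [norm_smul, hx, norm_mul, Real.norm_eq_abs, mul_one, abs_pow, abs_norm, abs_two]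
    have i1 : ‖d‖ ^ 2 * |inner ℝ x w| ≤ ‖d‖ * ‖w‖ := by
      have : ‖d‖ ^ 2 ≤ ‖d‖ := by nlinarith [norm_nonneg d]
      gcongr
    have i2 : |inner ℝ d w| * ‖d‖ ≤ ‖d‖ * ‖w‖ := by
      calc _ ≤ (‖d‖ * ‖w‖) * 1 := by gcongr
        _ = _ := mul_one _
    have i3 : 2 * |inner ℝ x w| * ‖d‖ ≤ 2 * (‖d‖ * ‖w‖) := by
      nlinarith [norm_nonneg d]
    linarith
  have e4 : ‖-2 / ‖x + y‖ ^ 2‖ ≤ 2 / 3 := by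
    rw [norm_div, Real.norm_eq_abs, Real.norm_eq_abs, abs_neg, abs_two, abs_of_nonneg (by positivity)]
    gcongr
  calc _ ≤ 2 / 3 * (6 * ‖d‖ * ‖w‖) := by gcongr
    _ = _ := by ring

/-- The orbit map `k ↦ k z` of a unit vector sends Haar measure to `σ`: both sides equal the double
integral of `f (k x)` over `k` and `x`, by the transitivity of `O(n)` on the sphere and by the
rotation invariance of `σ`. -/
lemma lintegral_act {n : ℕ} (hn : 1 ≤ n) (f : E n → ℝ≥0∞) (hf : Measurable f) (z : E n)
    (hz : ‖z‖ = 1) : ∫⁻ k, f (act k z) ∂(haarO n) = ∫⁻ x, f x ∂(sphMeasure n) := by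
  have := isProbabilityMeasure_sphMeasure hn
  have h1 : ∀ x, ‖x‖ = 1 → ∫⁻ k, f (act k x) ∂(haarO n) = ∫⁻ k, f (act k z) ∂(haarO n) := by
    intro x hx
    obtain ⟨g, rfl⟩ := exists_act_eq z x (hz.trans hx.symm)
    simp_rw [← act_mul]
    exact lintegral_mul_right_eq_self (μ := haarO n) (fun k => f (act k z)) g
  have h2 : ∫⁻ x, ∫⁻ k, f (act k x) ∂(haarO n) ∂(sphMeasure n)
      = ∫⁻ k, f (act k z) ∂(haarO n) := by
    rw [lintegral_congr_ae (g := fun _ => ∫⁻ k, f (act k z) ∂(haarO n))]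
    · simp
    · have : ∀ᵐ x ∂(sphMeasure n), x ∈ sphere (0 : E n) 1 := sphMeasure_compl_sphere n
      filter_upwards [this] with x hx
      exact h1 x (by simpa using hx)
  rw [← h2, lintegral_lintegral_swap]
  · have h3 : ∀ k : OG n, ∫⁻ x, f (act k x) ∂(sphMeasure n) = ∫⁻ x, f x ∂(sphMeasure n) := by
      intro k
      conv_rhs => rw [← map_sphMeasure hn (act k)]
      rw [lintegral_map hf (act k).continuous.measurable]
    simp [h3]
  · exact (hf.comp ((continuous_act n).comp continuous_swap).measurable).aemeasurable

/-! ### H-harmonic functions and the maximum principle -/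

/-- `w1 x` and `w2 x` are the first and second derivatives of `w` at `x`, and they satisfy the equation of
H-harmonicity at `x`, divided by `1 - |x|²`. Carrying the derivatives along explicitly makes it easy
to differentiate under the integral sign. -/
def IsHJet {n : ℕ} (w : E n → ℝ) (w1 : E n → E n →L[ℝ] ℝ) (w2 : E n → E n →L[ℝ] E n →L[ℝ] ℝ)
    (x : E n) : Prop :=
  HasFDerivAt w (w1 x) x ∧ HasFDerivAt w1 (w2 x) x ∧
    (1 - ‖x‖ ^ 2) * ∑ i, w2 x (EuclideanSpace.single i 1) (EuclideanSpace.single i 1)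
      + 2 * ((n : ℝ) - 2) * w1 x x = 0

/-- Twice differentiable solutions of `Du = 0` on the unit ball. In contrast with `HHarmonic`, the
differentiability is part of the definition. -/
def HHarm {n : ℕ} (w : E n → ℝ) : Prop :=
  ∃ w1 w2, ∀ x ∈ ball (0 : E n) 1, IsHJet w w1 w2 x

section
variable {n : ℕ} {V : Type*} [NormedAddCommGroup V] [NormedSpace ℝ V]

lemma hasFDerivAt_integral_OG [CompleteSpace V] (ν : Measure (OG n)) [IsFiniteMeasure ν]
    {F : E n → OG n → V} {F1 : E n → OG n → E n →L[ℝ] V}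
    (hF : ContinuousOn F.uncurry (ball (0 : E n) 1 ×ˢ univ))
    (hF1 : ContinuousOn F1.uncurry (ball (0 : E n) 1 ×ˢ univ))
    (hd : ∀ x ∈ ball (0 : E n) 1, ∀ k, HasFDerivAt (F · k) (F1 x k) x)
    {x : E n} (hx : x ∈ ball (0 : E n) 1) :
    HasFDerivAt (fun x => ∫ k, F x k ∂ν) (∫ k, F1 x k ∂ν) x := by
  have hcF : ∀ y ∈ ball (0 : E n) 1, Continuous (F y) := fun y hy =>
    hF.comp_continuous (f := fun k => (y, k)) (by fun_prop) fun k => ⟨hy, mem_univ _⟩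
  have hcF1 : ∀ y ∈ ball (0 : E n) 1, Continuous (F1 y) := fun y hy =>
    hF1.comp_continuous (f := fun k => (y, k)) (by fun_prop) fun k => ⟨hy, mem_univ _⟩
  obtain ⟨ε, hε, hsub⟩ := nhds_basis_closedBall.mem_iff.1 (isOpen_ball.mem_nhds hx)
  have hK : IsCompact (closedBall x ε ×ˢ (univ : Set (OG n))) :=
    (isCompact_closedBall _ _).prod isCompact_univ
  obtain ⟨C, hC⟩ := hK.exists_bound_of_continuousOn (hF1.mono (prod_mono_left hsub))
  have hfin : ∀ (f : OG n → V), Continuous f → Integrable f ν := fun f hf =>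
    hf.integrable_of_hasCompactSupport (HasCompactSupport.of_compactSpace f)
  refine hasFDerivAt_integral_of_dominated_of_fderiv_le (bound := fun _ => C)
    (closedBall_mem_nhds x hε) ?_ (hfin _ (hcF x hx)) (hcF1 x hx).aestronglyMeasurable ?_
    (integrable_const _) ?_
  · filter_upwards [isOpen_ball.mem_nhds hx] with y hy
    exact (hcF y hy).aestronglyMeasurable
  · exact Eventually.of_forall fun k y hy => hC (y, k) ⟨hy, mem_univ _⟩
  · exact Eventually.of_forall fun k y hy => hd y (hsub hy) k

lemma integral_apply_OG [CompleteSpace V] (ν : Measure (OG n)) [IsFiniteMeasure ν]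
    {f : OG n → E n →L[ℝ] V} (hf : Continuous f) (v : E n) :
    (∫ k, f k ∂ν) v = ∫ k, f k v ∂ν :=
  ContinuousLinearMap.integral_apply
    (hf.integrable_of_hasCompactSupport (HasCompactSupport.of_compactSpace f)) v

end

/-- A continuous family of H-harmonic functions, with jointly continuous derivatives up to order
two, can be integrated over the compact group `O(n)`. -/
lemma hharm_integral {n : ℕ} (ν : Measure (OG n)) [IsFiniteMeasure ν]
    {F : E n → OG n → ℝ} {F1 : E n → OG n → E n →L[ℝ] ℝ} {F2 : E n → OG n → E n →L[ℝ] E n →L[ℝ] ℝ}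
    (hF : ContinuousOn F.uncurry (ball (0 : E n) 1 ×ˢ univ))
    (hF1 : ContinuousOn F1.uncurry (ball (0 : E n) 1 ×ˢ univ))
    (hF2 : ContinuousOn F2.uncurry (ball (0 : E n) 1 ×ˢ univ))
    (hjet : ∀ x ∈ ball (0 : E n) 1, ∀ k, IsHJet (F · k) (F1 · k) (F2 · k) x) :
    HHarm fun x => ∫ k, F x k ∂ν := by
  refine ⟨fun x => ∫ k, F1 x k ∂ν, fun x => ∫ k, F2 x k ∂ν, fun x hx => ⟨?_, ?_, ?_⟩⟩
  · exact hasFDerivAt_integral_OG ν hF hF1 (fun y hy k => (hjet y hy k).1) hx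
  · exact hasFDerivAt_integral_OG ν hF1 hF2 (fun y hy k => (hjet y hy k).2.1) hx
  · have c1 : Continuous (F1 x) :=
      hF1.comp_continuous (f := fun k => (x, k)) (by fun_prop) fun k => ⟨hx, mem_univ _⟩
    have c2 : Continuous (F2 x) :=
      hF2.comp_continuous (f := fun k => (x, k)) (by fun_prop) fun k => ⟨hx, mem_univ _⟩
    have c3 : ∀ v, Continuous fun k => F2 x k v := fun v => c2.clm_apply continuous_const
    have i4 : ∀ v w, Integrable (fun k => F2 x k v w) ν := fun v w =>
      ((c3 v).clm_apply continuous_const).integrable_of_hasCompactSupport (.of_compactSpace _)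
    have i1 : Integrable (fun k => F1 x k x) ν :=
      (c1.clm_apply continuous_const).integrable_of_hasCompactSupport (.of_compactSpace _)
    have e1 : (∫ k, F1 x k ∂ν) x = ∫ k, F1 x k x ∂ν := integral_apply_OG ν c1 x
    have e2 : ∀ v w, (∫ k, F2 x k ∂ν) v w = ∫ k, F2 x k v w ∂ν := fun v w =>
      (congrArg (fun L : E n →L[ℝ] ℝ => L w) (integral_apply_OG ν c2 v)).trans
        (integral_apply_OG ν (c3 v) w)
    simp only [e1, e2]
    rw [← integral_finsetSum _ (fun i _ => i4 _ _), ← integral_const_mul, ← integral_const_mul,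
      ← integral_add]
    · rw [integral_congr_ae (Eventually.of_forall fun k => (hjet x hx k).2.2)]
      simp
    · exact (integrable_finsetSum _ fun i _ => i4 _ _).const_mul _
    · exact i1.const_mul _

lemma HHarm.sub {n : ℕ} {v w : E n → ℝ} (hv : HHarm v) (hw : HHarm w) :
    HHarm fun x => v x - w x := by
  obtain ⟨v1, v2, hv⟩ := hv
  obtain ⟨w1, w2, hw⟩ := hw
  refine ⟨fun x => v1 x - w1 x, fun x => v2 x - w2 x, fun x hx => ⟨?_, ?_, ?_⟩⟩
  · exact (hv x hx).1.sub (hw x hx).1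
  · exact (hv x hx).2.1.sub (hw x hx).2.1
  · have h1 := (hv x hx).2.2
    have h2 := (hw x hx).2.2
    simp only [sub_apply, Finset.sum_sub_distrib]
    linear_combination h1 - h2

lemma HHarm.neg {n : ℕ} {w : E n → ℝ} (hw : HHarm w) : HHarm fun x => - w x := by
  obtain ⟨w1, w2, hw⟩ := hw
  refine ⟨fun x => - w1 x, fun x => - w2 x, fun x hx => ⟨?_, ?_, ?_⟩⟩
  · exact (hw x hx).1.neg
  · exact (hw x hx).2.1.neg
  · have h2 := (hw x hx).2.2
    simp only [neg_apply, Finset.sum_neg_distrib]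
    linear_combination - h2

lemma hharm_const {n : ℕ} (c : ℝ) : HHarm fun _ : E n => c :=
  ⟨fun _ => 0, fun _ => 0, fun x _ => ⟨hasFDerivAt_const _ _, hasFDerivAt_const _ _, by simp⟩⟩

/-- The necessary second order condition at a local maximum of a function of one variable. -/
lemma second_deriv_nonpos {f f' : ℝ → ℝ} {c : ℝ} (h1 : ∀ᶠ t in 𝓝 0, HasDerivAt f (f' t) t)
    (h2 : HasDerivAt f' c 0) (hmax : IsLocalMax f 0) : c ≤ 0 := by
  by_contra! hc
  have e1 : deriv f =ᶠ[𝓝 0] f' := h1.mono fun t ht => ht.deriv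
  have h3 : deriv (deriv f) 0 = c := by rw [e1.deriv_eq, h2.deriv]
  have h4 : IsLocalMin f 0 := isLocalMin_of_deriv_deriv_pos (by rw [h3]; exact hc)
    hmax.deriv_eq_zero h1.self_of_nhds.continuousAt
  have h5 : f =ᶠ[𝓝 0] fun _ => f 0 := by
    filter_upwards [hmax, h4] with t ht ht'
    exact le_antisymm ht ht'
  have h6 : deriv f =ᶠ[𝓝 0] fun _ => 0 := by
    have := h5.deriv
    simpa using this
  have h7 : deriv (deriv f) 0 = 0 := by rw [h6.deriv_eq]; simp
  linarith

/-- The weak maximum principle: at an interior maximum `z` of `w + ε|x|²` the Laplacian of `w` is at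
most `-2εn`, while the first order term equals `-2ε|z|²` times a nonnegative factor, which contradicts
the equation. -/
lemma HHarm.le_of_sphere {n : ℕ} (hn : 2 ≤ n) {w : E n → ℝ} (hw : HHarm w) {r c : ℝ} (hr : 0 < r)
    (hr1 : r < 1) (hle : ∀ x, ‖x‖ = r → w x ≤ c) {x : E n} (hx : ‖x‖ ≤ r) : w x ≤ c := by
  obtain ⟨w1, w2, hw⟩ := hw
  have hsub : closedBall (0 : E n) r ⊆ ball 0 1 := closedBall_subset_ball hr1
  have hwc : ContinuousOn w (closedBall 0 r) := fun y hy =>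
    (hw y (hsub hy)).1.continuousAt.continuousWithinAt
  have key : ∀ ε > 0, w x ≤ c + ε := by
    intro ε hε
    obtain ⟨z, hz, hmax⟩ := (isCompact_closedBall (0 : E n) r).exists_isMaxOn
      ⟨x, by simpa using hx⟩ (hwc.add (by fun_prop : ContinuousOn (fun y : E n => ε * ‖y‖ ^ 2) _))
    have hz' : ‖z‖ ≤ r := by simpa using hz
    have hxz : w x + ε * ‖x‖ ^ 2 ≤ w z + ε * ‖z‖ ^ 2 := hmax (by simpa using hx)
    rcases hz'.eq_or_lt with h | h
    · have := hle z h
      have hr2 : ε * ‖z‖ ^ 2 ≤ ε * 1 := by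
        gcongr; rw [h]; nlinarith
      nlinarith [mul_nonneg hε.le (sq_nonneg ‖x‖)]
    · exfalso
      have hloc : IsLocalMax (fun y => w y + ε * ‖y‖ ^ 2) z := by
        filter_upwards [isOpen_ball.mem_nhds (show z ∈ ball (0 : E n) r by simpa using h)]
          with y hy using hmax (ball_subset_closedBall hy)
      obtain ⟨d1, d2, d3⟩ := hw z (hsub hz)
      have hline : ∀ i : Fin n, ∀ t : ℝ, HasDerivAt (fun t : ℝ => z + t • EuclideanSpace.single i (1:ℝ))
          (EuclideanSpace.single i (1:ℝ)) t := by
        intro i t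
        simpa using ((hasDerivAt_id t).smul_const (EuclideanSpace.single i (1:ℝ))).const_add z
      have hnear : ∀ i : Fin n, ∀ᶠ t : ℝ in 𝓝 0, z + t • EuclideanSpace.single i (1:ℝ) ∈ ball (0 : E n) 1 := by
        intro i
        have : ContinuousAt (fun t : ℝ => z + t • EuclideanSpace.single i (1:ℝ)) 0 := by fun_prop
        exact this (isOpen_ball.mem_nhds (by simpa using hsub hz))
      have hsec : ∀ i : Fin n, w2 z (EuclideanSpace.single i 1) (EuclideanSpace.single i 1)
          + 2 * ε ≤ 0 := by
        intro i
        set e := EuclideanSpace.single i (1:ℝ) with he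
        have hen : ‖e‖ = 1 := by simp [he]
        refine second_deriv_nonpos (f := fun t : ℝ => w (z + t • e) + ε * ‖z + t • e‖ ^ 2)
          (f' := fun t => w1 (z + t • e) e + ε * (2 * inner ℝ (z + t • e) e)) ?_ ?_ ?_
        · filter_upwards [hnear i] with t ht
          refine HasDerivAt.add ?_ ?_
          · exact (hw _ ht).1.comp_hasDerivAt t (hline i t)
          · exact ((hline i t).norm_sq).const_mul ε
        · refine HasDerivAt.add ?_ ?_
          · have hz0 : z + (0:ℝ) • e = z := by simp
            have h4 : HasDerivAt (fun t : ℝ => w1 (z + t • e)) (w2 z e) 0 := by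
              have h5 : HasFDerivAt w1 (w2 z) (z + (0:ℝ) • e) := by rw [hz0]; exact d2
              exact h5.comp_hasDerivAt 0 (hline i 0)
            simpa using h4.clm_apply (hasDerivAt_const (0:ℝ) e)
          · have := (((hline i 0).inner ℝ (hasDerivAt_const (0:ℝ) e)).const_mul 2).const_mul ε
            refine this.congr_deriv ?_
            rw [inner_zero_right, zero_add, real_inner_self_eq_norm_sq, hen]; ring
        · have hc : ContinuousAt (fun t : ℝ => z + t • e) 0 := by fun_prop
          have hloc' : IsLocalMax (fun y => w y + ε * ‖y‖ ^ 2) (z + (0:ℝ) • e) := by simpa using hloc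
          exact hc.eventually hloc'
      have hgrad : w1 z z + ε * (2 * inner ℝ z z) = 0 := by
        have h6 := hloc.hasFDerivAt_eq_zero
          (d1.add ((hasStrictFDerivAt_norm_sq z).hasFDerivAt.const_mul ε))
        have h7 := congrArg (fun L : E n →L[ℝ] ℝ => L z) h6
        simpa using h7
      rw [real_inner_self_eq_norm_sq] at hgrad
      have hsum : ∑ i, w2 z (EuclideanSpace.single i 1) (EuclideanSpace.single i 1)
          ≤ - (2 * ε * n) := by
        calc _ ≤ ∑ i : Fin n, -(2 * ε) := Finset.sum_le_sum fun i _ => by linarith [hsec i]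
          _ = _ := by simp; ring
      have hn' : (2 : ℝ) ≤ n := by exact_mod_cast hn
      have hz1 : 0 < 1 - ‖z‖ ^ 2 := by nlinarith [norm_nonneg z]
      have h8 : (1 - ‖z‖ ^ 2) * ∑ i, w2 z (EuclideanSpace.single i 1) (EuclideanSpace.single i 1)
          < 0 := mul_neg_of_pos_of_neg hz1 (by nlinarith)
      have h9 : 2 * ((n : ℝ) - 2) * w1 z z ≤ 0 := by
        have : w1 z z ≤ 0 := by nlinarith [mul_nonneg hε.le (sq_nonneg ‖z‖)]
        exact mul_nonpos_of_nonneg_of_nonpos (by linarith) this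
      linarith
  exact le_of_forall_pos_le_add key

/-! ### Rotations and averages of H-harmonic functions -/

lemma hjet_of_hharmonic {n : ℕ} {u : E n → ℝ} (hu : ContDiffOn ℝ 2 u (ball (0 : E n) 1))
    (hH : HHarmonic n u) :
    (∀ x ∈ ball (0 : E n) 1, IsHJet u (fderiv ℝ u) (fderiv ℝ (fderiv ℝ u)) x) ∧
    ContinuousOn (fderiv ℝ u) (ball 0 1) ∧ ContinuousOn (fderiv ℝ (fderiv ℝ u)) (ball 0 1) := by
  have h1 : ContDiffOn ℝ 1 (fderiv ℝ u) (ball (0 : E n) 1) :=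
    hu.fderiv_of_isOpen isOpen_ball (by norm_num)
  refine ⟨fun x hx => ?_, h1.continuousOn, h1.continuousOn_fderiv_of_isOpen isOpen_ball le_rfl⟩
  have d1 : HasFDerivAt u (fderiv ℝ u x) x :=
    ((hu.contDiffAt (isOpen_ball.mem_nhds hx)).differentiableAt (by norm_num)).hasFDerivAt
  have d2 : HasFDerivAt (fderiv ℝ u) (fderiv ℝ (fderiv ℝ u) x) x :=
    ((h1.contDiffAt (isOpen_ball.mem_nhds hx)).differentiableAt (by norm_num)).hasFDerivAt
  refine ⟨d1, d2, ?_⟩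
  have h := hH x hx
  have hlap : lap n u x = ∑ i, fderiv ℝ (fderiv ℝ u) x (EuclideanSpace.single i 1)
      (EuclideanSpace.single i 1) := by
    refine Finset.sum_congr rfl fun i _ => ?_
    have := d2.clm_apply (hasFDerivAt_const (EuclideanSpace.single i (1:ℝ)) x)
    rw [this.fderiv]
    simp
  rw [hlap, Nder] at h
  have hx' : ‖x‖ < 1 := by simpa using hx
  have hpos : 1 - ‖x‖ ^ 2 ≠ 0 := by nlinarith [norm_nonneg x]
  refine mul_left_cancel₀ hpos ?_
  linear_combination h

/-- The trace of a bilinear form does not depend on the orthonormal basis. -/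
lemma sum_bilin_act {n : ℕ} (B : E n →L[ℝ] E n →L[ℝ] ℝ) (k : OG n) :
    ∑ i, B (act k (EuclideanSpace.single i 1)) (act k (EuclideanSpace.single i 1))
      = ∑ i, B (EuclideanSpace.single i 1) (EuclideanSpace.single i 1) := by
  let b := EuclideanSpace.basisFun (Fin n) ℝ
  let T : TensorProduct ℝ (E n) (E n) →ₗ[ℝ] ℝ :=
    TensorProduct.lift ((ContinuousLinearMap.coeLM ℝ).comp (B : E n →ₗ[ℝ] E n →L[ℝ] ℝ))
  have h1 := InnerProductSpace.canonicalCovariantTensor_eq_sum (E n) b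
  have h2 := InnerProductSpace.canonicalCovariantTensor_eq_sum (E n) (b.map (act k))
  have h3 := congrArg T (h2.symm.trans h1)
  simpa [T, b] using h3

/-- The equation is invariant under rotations. -/
lemma IsHJet.act {n : ℕ} {u : E n → ℝ} {u1 : E n → E n →L[ℝ] ℝ}
    {u2 : E n → E n →L[ℝ] E n →L[ℝ] ℝ} (c : ℝ) (k : OG n) {x : E n}
    (h : IsHJet u u1 u2 (act k x)) :
    IsHJet (fun y => c * u (_root_.act k y))
      (fun y => c • (u1 (_root_.act k y)).comp (k : E n →L[ℝ] E n))
      (fun y => c • ((ContinuousLinearMap.compL ℝ (E n) (E n) ℝ).flip (k : E n →L[ℝ] E n)).comp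
        ((u2 (_root_.act k y)).comp (k : E n →L[ℝ] E n))) x := by
  obtain ⟨h1, h2, h3⟩ := h
  have hk : HasFDerivAt (fun y => _root_.act k y) (k : E n →L[ℝ] E n) x :=
    (k : E n →L[ℝ] E n).hasFDerivAt
  have hk' : ∀ v, (k : E n →L[ℝ] E n) v = _root_.act k v := fun v => rfl
  refine ⟨(h1.comp x hk).const_mul c, ?_, ?_⟩
  · have h4 := (h2.comp x hk)
    have h5 := (((ContinuousLinearMap.compL ℝ (E n) (E n) ℝ).flip
      (k : E n →L[ℝ] E n)).hasFDerivAt.comp x h4).const_smul c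
    exact h5
  · rw [LinearIsometryEquiv.norm_map] at h3
    have := sum_bilin_act (u2 (_root_.act k x)) k
    simp only [smul_apply, ContinuousLinearMap.comp_apply,
      ContinuousLinearMap.flip_apply, ContinuousLinearMap.compL_apply, smul_eq_mul, hk',
      ← Finset.mul_sum, this]
    linear_combination c * h3

/-- An average of the rotates of an H-harmonic function is H-harmonic. -/
lemma hharm_average {n : ℕ} {u : E n → ℝ} (hu : ContDiffOn ℝ 2 u (ball (0 : E n) 1))
    (hH : HHarmonic n u) {φ : OG n → ℝ} (hφ : Continuous φ) :
    HHarm fun x => ∫ k, φ k * u (act k x) ∂haarO n := by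
  obtain ⟨hj, c1, c2⟩ := hjet_of_hharmonic hu hH
  have hact : ContinuousOn (fun p : E n × OG n => act p.2 p.1) (ball (0 : E n) 1 ×ˢ univ) :=
    ((continuous_act n).comp continuous_swap).continuousOn
  have hmem : MapsTo (fun p : E n × OG n => act p.2 p.1) (ball (0 : E n) 1 ×ˢ univ)
      (ball 0 1) := fun p hp => by
    have := hp.1
    simpa using this
  have hφ' : ContinuousOn (fun p : E n × OG n => φ p.2) (ball (0 : E n) 1 ×ˢ univ) := by
    fun_prop
  have hK : ContinuousOn (fun p : E n × OG n => (p.2 : E n →L[ℝ] E n))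
      (ball (0 : E n) 1 ×ˢ univ) := by fun_prop
  refine hharm_integral (haarO n) (F := fun x k => φ k * u (act k x))
    (F1 := fun x k => φ k • (fderiv ℝ u (act k x)).comp (k : E n →L[ℝ] E n))
    (F2 := fun x k => φ k • ((ContinuousLinearMap.compL ℝ (E n) (E n) ℝ).flip
        (k : E n →L[ℝ] E n)).comp ((fderiv ℝ (fderiv ℝ u) (act k x)).comp (k : E n →L[ℝ] E n)))
    ?_ ?_ ?_ ?_
  · exact hφ'.mul (hu.continuousOn.comp hact hmem)
  · exact hφ'.smul ((c1.comp hact hmem).clm_comp hK)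
  · refine hφ'.smul (ContinuousOn.clm_comp ?_ ((c2.comp hact hmem).clm_comp hK))
    exact ((ContinuousLinearMap.compL ℝ (E n) (E n) ℝ).flip).continuous.comp_continuousOn hK
  · intro x hx k
    exact IsHJet.act (φ k) k (hj _ (by simpa using hx))

/-! ### H-harmonicity of the hyperbolic Poisson kernel -/

/-- The real inner product of `E n` as a continuous bilinear map (`innerSL` is only conjugate
linear for a general scalar field, which gets in the way of differentiating it). -/
def inn (n : ℕ) : E n →L[ℝ] E n →L[ℝ] ℝ :=
  LinearMap.mkContinuous₂ (innerₗ (E n)) 1 fun x y => by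
    simpa using abs_real_inner_le_norm x y

lemma inn_apply {n : ℕ} (x y : E n) : inn n x y = inner ℝ x y := rfl

/-- The quotient `(1-|x|²)/|x-ξ|²`, whose `(n-1)`-st power is the Poisson kernel. -/
def qk {n : ℕ} (ξ x : E n) : ℝ := (1 - ‖x‖ ^ 2) * (‖x - ξ‖ ^ 2)⁻¹

/-- The gradient of `qk ξ`. -/
def qgrad {n : ℕ} (ξ x : E n) : E n :=
  (-2 * (‖x - ξ‖ ^ 2)⁻¹) • x + (-2 * (1 - ‖x‖ ^ 2) * (‖x - ξ‖ ^ 2)⁻¹ ^ 2) • (x - ξ)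

/-- The derivative of `qgrad ξ`, i.e. the Hessian of `qk ξ`. -/
def qhess {n : ℕ} (ξ x : E n) : E n →L[ℝ] E n :=
  (-2 * (‖x - ξ‖ ^ 2)⁻¹) • ContinuousLinearMap.id ℝ (E n)
    + ((4 * (‖x - ξ‖ ^ 2)⁻¹ ^ 2) • inn n (x - ξ)).smulRight x
    + ((-2 * (1 - ‖x‖ ^ 2) * (‖x - ξ‖ ^ 2)⁻¹ ^ 2) • ContinuousLinearMap.id ℝ (E n)
    + ((4 * (‖x - ξ‖ ^ 2)⁻¹ ^ 2) • inn n x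
      + (8 * (1 - ‖x‖ ^ 2) * (‖x - ξ‖ ^ 2)⁻¹ ^ 3) • inn n (x - ξ)).smulRight (x - ξ))

lemma norm_sub_sq_ne {n : ℕ} {ξ x : E n} (hξ : ‖ξ‖ = 1) (hx : x ∈ ball (0 : E n) 1) :
    ‖x - ξ‖ ^ 2 ≠ 0 := by
  have hne : x - ξ ≠ 0 := by
    intro h
    rw [sub_eq_zero] at h
    rw [mem_ball_zero_iff, h, hξ] at hx
    exact lt_irrefl _ hx
  exact pow_ne_zero 2 (norm_ne_zero_iff.2 hne)

lemma hasFDerivAt_one_sub {n : ℕ} (x : E n) :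
    HasFDerivAt (fun y : E n => 1 - ‖y‖ ^ 2) ((-2 : ℝ) • inn n x) x := by
  refine ((hasStrictFDerivAt_norm_sq x).hasFDerivAt.const_sub 1).congr_fderiv ?_
  ext v
  simp [inn_apply]

lemma hasFDerivAt_inv_B {n : ℕ} {ξ x : E n} (hB : ‖x - ξ‖ ^ 2 ≠ 0) :
    HasFDerivAt (fun y : E n => (‖y - ξ‖ ^ 2)⁻¹)
      ((-2 * (‖x - ξ‖ ^ 2)⁻¹ ^ 2 : ℝ) • inn n (x - ξ)) x := by
  have h1 : HasFDerivAt (fun y : E n => ‖y - ξ‖ ^ 2) ((2 : ℝ) • inn n (x - ξ)) x := by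
    refine (((hasStrictFDerivAt_norm_sq (x - ξ)).hasFDerivAt).comp x
      ((hasFDerivAt_id x).sub_const ξ)).congr_fderiv ?_
    ext v
    simp [inn_apply]
  refine ((hasDerivAt_inv hB).comp_hasFDerivAt x h1).congr_fderiv ?_
  ext v
  simp [inn_apply]
  ring

lemma hasFDerivAt_qk {n : ℕ} {ξ x : E n} (hB : ‖x - ξ‖ ^ 2 ≠ 0) :
    HasFDerivAt (qk ξ) (inn n (qgrad ξ x)) x := by
  refine ((hasFDerivAt_one_sub x).mul (hasFDerivAt_inv_B hB)).congr_fderiv ?_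
  ext v
  simp only [qgrad, map_add, map_smul, add_apply, smul_apply, smul_eq_mul]
  ring

lemma hasFDerivAt_qgrad {n : ℕ} {ξ x : E n} (hB : ‖x - ξ‖ ^ 2 ≠ 0) :
    HasFDerivAt (qgrad ξ) (qhess ξ x) x := by
  have hA := hasFDerivAt_one_sub x
  have hI := hasFDerivAt_inv_B hB
  have h1 := (hI.const_mul (-2)).smul (hasFDerivAt_id x)
  have h2 := ((hA.const_mul (-2)).mul (hI.pow 2)).smul ((hasFDerivAt_id x).sub_const ξ)
  refine (h1.add h2).congr_fderiv ?_
  ext1 v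
  simp only [qhess, add_apply, smul_apply, smul_eq_mul, ContinuousLinearMap.smulRight_apply,
    ContinuousLinearMap.id_apply, id_eq, Pi.mul_apply]
  module

/-- First derivative of the Poisson kernel. -/
def Ph1 {n : ℕ} (ξ x : E n) : E n →L[ℝ] ℝ :=
  (((n : ℝ) - 1) * qk ξ x ^ (n - 2)) • inn n (qgrad ξ x)

/-- Second derivative of the Poisson kernel. -/
def Ph2 {n : ℕ} (ξ x : E n) : E n →L[ℝ] E n →L[ℝ] ℝ :=
  ((((n : ℝ) - 1) * ((n : ℝ) - 2) * qk ξ x ^ (n - 3)) • inn n (qgrad ξ x)).smulRight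
      (inn n (qgrad ξ x))
    + (((n : ℝ) - 1) * qk ξ x ^ (n - 2)) • (inn n).comp (qhess ξ x)

lemma Ph_eq_qk {n : ℕ} (ξ x : E n) : Ph n x ξ = qk ξ x ^ (n - 1) := by
  rw [Ph, qk, div_eq_mul_inv]

lemma sum_inn_inn {n : ℕ} (y z : E n) :
    ∑ i, inn n y (EuclideanSpace.single i 1) * inn n z (EuclideanSpace.single i 1)
      = inner ℝ y z := by
  rw [PiLp.inner_apply]
  refine Finset.sum_congr rfl fun i _ => ?_
  simp [inn_apply, EuclideanSpace.inner_single_right, mul_comm]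

/-- The hyperbolic Poisson kernel is H-harmonic in `x`. With `q = (1-|x|²)/|x-ξ|²` the equation for
`q ^ (n-1)` is a rational identity in `|x|²` and `⟨x, ξ⟩`. -/
lemma isHJet_Ph {n : ℕ} (hn : 3 ≤ n) {ξ x : E n} (hξ : ‖ξ‖ = 1) (hx : x ∈ ball (0 : E n) 1) :
    IsHJet (fun y => Ph n y ξ) (Ph1 ξ) (Ph2 ξ) x := by
  have hB := norm_sub_sq_ne hξ hx
  have hq := hasFDerivAt_qk hB
  have hg := hasFDerivAt_qgrad hB
  obtain ⟨m, rfl⟩ : ∃ m, n = m + 3 := ⟨n - 3, by omega⟩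
  refine ⟨?_, ?_, ?_⟩
  · simp only [Ph_eq_qk]
    refine (hq.pow (m + 3 - 1)).congr_fderiv ?_
    ext v
    simp [Ph1]
    left; left; ring
  · have h1 := ((hq.pow (m + 1)).const_mul ((m : ℝ) + 2)).smul ((inn (m + 3)).hasFDerivAt.comp x hg)
    have e : Ph1 ξ = fun y => (((m : ℝ) + 2) * qk ξ y ^ (m + 1)) • inn (m + 3) (qgrad ξ y) := by
      funext y
      have e1 : m + 3 - 2 = m + 1 := by omega
      rw [Ph1, e1]
      push_cast
      ring_nf
    rw [e]
    refine h1.congr_fderiv ?_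
    ext v w
    simp [Ph2]
    ring
  · have hs : ∀ i : Fin (m + 3), Ph2 ξ x (EuclideanSpace.single i 1) (EuclideanSpace.single i 1) =
      (((m : ℝ) + 2) * (m + 1) * qk ξ x ^ m) *
        (inn _ (qgrad ξ x) (EuclideanSpace.single i 1) * inn _ (qgrad ξ x) (EuclideanSpace.single i 1))
      + (((m : ℝ) + 2) * qk ξ x ^ (m + 1)) *
      ((-2 * (‖x - ξ‖ ^ 2)⁻¹ + -2 * (1 - ‖x‖ ^ 2) * (‖x - ξ‖ ^ 2)⁻¹ ^ 2) * 1
      + 8 * (‖x - ξ‖ ^ 2)⁻¹ ^ 2 * (inn _ x (EuclideanSpace.single i 1) * inn _ (x - ξ) (EuclideanSpace.single i 1))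
      + (8 * (1 - ‖x‖ ^ 2) * (‖x - ξ‖ ^ 2)⁻¹ ^ 3) * (inn _ (x - ξ) (EuclideanSpace.single i 1) * inn _ (x - ξ) (EuclideanSpace.single i 1))) := by
      intro i
      have h1 : inn (m + 3) (EuclideanSpace.single i 1) (EuclideanSpace.single i 1) = 1 := by
        rw [inn_apply, real_inner_self_eq_norm_sq]; simp
      have e1 : m + 3 - 2 = m + 1 := by omega
      have e2 : m + 3 - 3 = m := by omega
      simp only [Ph2, qhess, add_apply, smul_apply, smul_eq_mul,
        ContinuousLinearMap.smulRight_apply, ContinuousLinearMap.comp_apply, map_add, map_smul,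
        ContinuousLinearMap.id_apply, h1, e1, e2]
      push_cast
      ring
    simp only [hs, Finset.sum_add_distrib, ← Finset.mul_sum, sum_inn_inn]
    have hx' : ‖x‖ < 1 := by simpa using hx
    have hA : 1 - ‖x‖ ^ 2 ≠ 0 := by nlinarith [norm_nonneg x]
    have e1 : m + 3 - 2 = m + 1 := by omega
    have hBB : ‖x - ξ‖ ^ 2 = ‖x‖ ^ 2 - 2 * inner ℝ x ξ + 1 := by
      rw [norm_sub_sq_real, hξ]; ring
    have hxD : inner ℝ x (x - ξ) = ‖x‖ ^ 2 - inner ℝ x ξ := by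
      rw [inner_sub_right, real_inner_self_eq_norm_sq]
    have hDx : inner ℝ (x - ξ) x = ‖x‖ ^ 2 - inner ℝ x ξ := by
      rw [real_inner_comm, hxD]
    simp only [Ph1, e1, smul_apply, smul_eq_mul, inn_apply, qgrad, inner_add_left, inner_add_right,
      inner_smul_left, inner_smul_right, hxD, hDx, real_inner_self_eq_norm_sq, qk, pow_succ _ m]
    generalize hB' : ‖x - ξ‖ ^ 2 = B at *
    generalize ((1 - ‖x‖ ^ 2) * B⁻¹) ^ m = Q
    generalize inner ℝ x ξ = t at *
    generalize ‖x‖ ^ 2 = a at *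
    obtain rfl : t = (a + 1 - B) / 2 := by linarith
    simp
    field_simp
    ring

lemma ContinuousOn.smulRight' {n : ℕ} {X V : Type*} [TopologicalSpace X] [NormedAddCommGroup V]
    [NormedSpace ℝ V] {s : Set X} {f : X → E n →L[ℝ] ℝ} {g : X → V}
    (hf : ContinuousOn f s) (hg : ContinuousOn g s) :
    ContinuousOn (fun x => (f x).smulRight (g x)) s :=
  ((ContinuousLinearMap.smulRightL ℝ (E n) V).continuous.comp_continuousOn hf).clm_apply hg

lemma continuousOn_ph_jets (n : ℕ) :
    ContinuousOn (fun p : E n × E n => Ph n p.1 p.2) (ball 0 1 ×ˢ sphere 0 1) ∧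
    ContinuousOn (fun p : E n × E n => Ph1 p.2 p.1) (ball 0 1 ×ˢ sphere 0 1) ∧
    ContinuousOn (fun p : E n × E n => Ph2 p.2 p.1) (ball 0 1 ×ˢ sphere 0 1) := by
  have hB : ∀ p ∈ (ball 0 1 ×ˢ sphere 0 1 : Set (E n × E n)), ‖p.1 - p.2‖ ^ 2 ≠ 0 :=
    fun p hp => norm_sub_sq_ne (by simpa using hp.2) hp.1
  have hI : ContinuousOn (fun p : E n × E n => (‖p.1 - p.2‖ ^ 2)⁻¹) (ball 0 1 ×ˢ sphere 0 1) :=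
    ContinuousOn.inv₀ (by fun_prop) hB
  have hq : ContinuousOn (fun p : E n × E n => qk p.2 p.1) (ball 0 1 ×ˢ sphere 0 1) :=
    ContinuousOn.mul (by fun_prop) hI
  have hi1 : ContinuousOn (fun p : E n × E n => inn n p.1) (ball 0 1 ×ˢ sphere 0 1) :=
    (inn n).continuous.comp_continuousOn continuousOn_fst
  have hi2 : ContinuousOn (fun p : E n × E n => inn n (p.1 - p.2)) (ball 0 1 ×ˢ sphere 0 1) :=
    (inn n).continuous.comp_continuousOn (by fun_prop)
  have hg : ContinuousOn (fun p : E n × E n => qgrad p.2 p.1) (ball 0 1 ×ˢ sphere 0 1) := by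
    unfold qgrad
    fun_prop
  have hh : ContinuousOn (fun p : E n × E n => qhess p.2 p.1) (ball 0 1 ×ˢ sphere 0 1) := by
    have c1 : ContinuousOn (fun p : E n × E n => -2 * (‖p.1 - p.2‖ ^ 2)⁻¹)
        (ball 0 1 ×ˢ sphere 0 1) := by fun_prop
    have c2 : ContinuousOn (fun p : E n × E n => 4 * (‖p.1 - p.2‖ ^ 2)⁻¹ ^ 2)
        (ball 0 1 ×ˢ sphere 0 1) := by fun_prop
    have c3 : ContinuousOn (fun p : E n × E n => -2 * (1 - ‖p.1‖ ^ 2) * (‖p.1 - p.2‖ ^ 2)⁻¹ ^ 2)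
        (ball 0 1 ×ˢ sphere 0 1) := by fun_prop
    have c4 : ContinuousOn (fun p : E n × E n => 8 * (1 - ‖p.1‖ ^ 2) * (‖p.1 - p.2‖ ^ 2)⁻¹ ^ 3)
        (ball 0 1 ×ˢ sphere 0 1) := by fun_prop
    have c5 : ContinuousOn (fun p : E n × E n => p.1 - p.2) (ball 0 1 ×ˢ sphere 0 1) := by
      fun_prop
    exact ((c1.smul continuousOn_const).add
      (ContinuousOn.smulRight' (c2.smul hi2) continuousOn_fst)).add
      ((c3.smul continuousOn_const).add
      (ContinuousOn.smulRight' ((c2.smul hi1).add (c4.smul hi2)) c5))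
  have hig : ContinuousOn (fun p : E n × E n => inn n (qgrad p.2 p.1)) (ball 0 1 ×ˢ sphere 0 1) :=
    (inn n).continuous.comp_continuousOn hg
  refine ⟨?_, ?_, ?_⟩
  · simp only [Ph_eq_qk]
    exact hq.pow _
  · have c1 : ContinuousOn (fun p : E n × E n => ((n : ℝ) - 1) * qk p.2 p.1 ^ (n - 2))
        (ball 0 1 ×ˢ sphere 0 1) := by fun_prop
    exact c1.smul hig
  · have c1 : ContinuousOn (fun p : E n × E n => ((n : ℝ) - 1) * qk p.2 p.1 ^ (n - 2))
        (ball 0 1 ×ˢ sphere 0 1) := by fun_prop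
    have c2 : ContinuousOn (fun p : E n × E n =>
        ((n : ℝ) - 1) * ((n : ℝ) - 2) * qk p.2 p.1 ^ (n - 3)) (ball 0 1 ×ˢ sphere 0 1) := by
      fun_prop
    exact (ContinuousOn.smulRight' (c2.smul hig) hig).add
      (c1.smul (continuousOn_const.clm_comp hh))

/-! ### Poisson integrals -/

lemma Ph_act {n : ℕ} (g : OG n) (x y : E n) : Ph n (act g x) (act g y) = Ph n x y := by
  simp only [Ph, LinearIsometryEquiv.norm_map, ← map_sub]

lemma Ph_nonneg {n : ℕ} {x : E n} (hx : x ∈ ball (0 : E n) 1) (y : E n) : 0 ≤ Ph n x y := by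
  have hx' : ‖x‖ < 1 := by simpa using hx
  have hA : 0 ≤ 1 - ‖x‖ ^ 2 := by nlinarith [norm_nonneg x]
  exact pow_nonneg (div_nonneg hA (by positivity)) _

lemma Ph_symm {n : ℕ} (r : ℝ) {x y : E n} (hx : ‖x‖ = 1) (hy : ‖y‖ = 1) :
    Ph n (r • x) y = Ph n (r • y) x := by
  simp only [Ph, norm_sub_sq_real, norm_smul, hx, hy, inner_smul_left, real_inner_comm x y]

lemma continuousOn_Ph_act {n : ℕ} {e : E n} (he : ‖e‖ = 1) :
    ContinuousOn (fun p : E n × OG n => Ph n p.1 (act p.2 e)) (ball 0 1 ×ˢ univ) :=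
  (continuousOn_ph_jets n).1.comp (f := fun p : E n × OG n => (p.1, act p.2 e))
    (continuous_fst.prodMk ((continuous_act_left e).comp continuous_snd)).continuousOn
    fun p hp => ⟨hp.1, by simp [he]⟩

lemma continuous_Ph_act {n : ℕ} {e : E n} (he : ‖e‖ = 1) {x : E n} (hx : x ∈ ball (0 : E n) 1) :
    Continuous fun k : OG n => Ph n x (act k e) :=
  (continuousOn_Ph_act he).comp_continuous (f := fun k : OG n => (x, k)) (by fun_prop)
    fun _ => ⟨hx, mem_univ _⟩

lemma integrable_OG {n : ℕ} (ν : Measure (OG n)) [IsFiniteMeasure ν] {f : OG n → ℝ}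
    (hf : Continuous f) : Integrable f ν :=
  hf.integrable_of_hasCompactSupport (HasCompactSupport.of_compactSpace f)

lemma continuousOn_Ph1_act {n : ℕ} {e : E n} (he : ‖e‖ = 1) :
    ContinuousOn (fun p : E n × OG n => Ph1 (act p.2 e) p.1) (ball (0 : E n) 1 ×ˢ univ) :=
  (continuousOn_ph_jets n).2.1.comp (f := fun p : E n × OG n => (p.1, act p.2 e))
    (continuous_fst.prodMk ((continuous_act_left e).comp continuous_snd)).continuousOn
    fun p hp => ⟨hp.1, by simp [he]⟩

lemma continuousOn_Ph2_act {n : ℕ} {e : E n} (he : ‖e‖ = 1) :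
    ContinuousOn (fun p : E n × OG n => Ph2 (act p.2 e) p.1) (ball (0 : E n) 1 ×ˢ univ) :=
  (continuousOn_ph_jets n).2.2.comp (f := fun p : E n × OG n => (p.1, act p.2 e))
    (continuous_fst.prodMk ((continuous_act_left e).comp continuous_snd)).continuousOn
    fun p hp => ⟨hp.1, by simp [he]⟩

/-- Poisson integrals over `O(n)` are H-harmonic. -/
lemma hharm_kernel {n : ℕ} (hn : 3 ≤ n) (ν : Measure (OG n)) [IsFiniteMeasure ν] {g : OG n → ℝ}
    (hg : Continuous g) {e : E n} (he : ‖e‖ = 1) :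
    HHarm fun x => ∫ k, g k * Ph n x (act k e) ∂ν := by
  have hg' : ContinuousOn (fun p : E n × OG n => g p.2) (ball (0 : E n) 1 ×ˢ univ) := by
    fun_prop
  refine hharm_integral ν (F := fun x k => g k * Ph n x (act k e))
    (F1 := fun x k => g k • Ph1 (act k e) x) (F2 := fun x k => g k • Ph2 (act k e) x) ?_ ?_ ?_ ?_
  · exact hg'.mul (continuousOn_Ph_act he)
  · exact hg'.smul (continuousOn_Ph1_act he)
  · exact hg'.smul (continuousOn_Ph2_act he)
  · intro x hx k
    obtain ⟨h1, h2, h3⟩ := isHJet_Ph hn (ξ := act k e) (by simp [he]) hx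
    refine ⟨h1.const_mul _, h2.fun_const_smul (g k), ?_⟩
    simp only [smul_apply, smul_eq_mul, ← Finset.mul_sum]
    linear_combination g k * h3

/-- Rotation invariance makes `x ↦ ∫ Ph x` constant on spheres, so by the maximum principle it is
constant on the ball. -/
lemma integral_Ph_act {n : ℕ} (hn : 3 ≤ n) {e : E n} (he : ‖e‖ = 1) {x : E n}
    (hx : x ∈ ball (0 : E n) 1) : ∫ k, Ph n x (act k e) ∂haarO n = 1 := by
  have h0 : ∫ k, Ph n (0 : E n) (act k e) ∂haarO n = 1 := by simp [Ph, he]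
  have hh : HHarm fun x : E n => ∫ k, Ph n x (act k e) ∂haarO n := by
    simpa using hharm_kernel hn (haarO n) (g := fun _ => 1) continuous_const he
  have hinv : ∀ g : OG n, ∀ x : E n, ∫ k, Ph n (act g x) (act k e) ∂haarO n
      = ∫ k, Ph n x (act k e) ∂haarO n := by
    intro g x
    rw [← integral_mul_left_eq_self _ g]
    simp only [act_mul, Ph_act]
  rcases eq_or_ne x 0 with rfl | hx0
  · exact h0
  have hr : 0 < ‖x‖ := norm_pos_iff.2 hx0
  have hr1 : ‖x‖ < 1 := by simpa using hx
  have hs : ∀ y : E n, ‖y‖ = ‖x‖ → ∫ k, Ph n y (act k e) ∂haarO n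
      = ∫ k, Ph n x (act k e) ∂haarO n := by
    intro y hy
    obtain ⟨g, rfl⟩ := exists_act_eq x y hy.symm
    exact hinv g x
  have h1 := hh.le_of_sphere (by omega) hr hr1 (fun y hy => (hs y hy).le) (x := 0) (by simp)
  have h2 := hh.neg.le_of_sphere (by omega) hr hr1 (fun y hy => (neg_inj.2 (hs y hy)).le) (x := 0)
    (by simp)
  linarith

/-- By the symmetry `P_h(rζ, ξ) = P_h(rξ, ζ)` the kernel also has total mass `1` in the variable `ζ`. -/
lemma lintegral_Ph_sphere {n : ℕ} (hn : 3 ≤ n) {r : ℝ} (hr : r ∈ Ioo (0 : ℝ) 1) {ξ : E n}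
    (hξ : ‖ξ‖ = 1) : ∫⁻ ζ, ENNReal.ofReal (Ph n (r • ζ) ξ) ∂sphMeasure n = 1 := by
  have hmeas : Measurable fun ζ : E n => ENNReal.ofReal (Ph n (r • ζ) ξ) := by
    unfold Ph; fun_prop
  have hx : r • ξ ∈ ball (0 : E n) 1 := by
    simp [norm_smul, hξ, abs_of_pos hr.1, hr.2]
  rw [← lintegral_act (by omega) _ hmeas ξ hξ]
  simp_rw [fun k : OG n => Ph_symm (n := n) r (x := act k ξ) (y := ξ) (by simp [hξ]) hξ]
  rw [← ofReal_integral_eq_lintegral_ofReal (integrable_OG _ (continuous_Ph_act hξ hx))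
    (Eventually.of_forall fun k => Ph_nonneg hx _), integral_Ph_act hn hξ hx, ENNReal.ofReal_one]

lemma lintegral_lintegral_Ph {n : ℕ} (hn : 3 ≤ n) {r : ℝ} (hr : r ∈ Ioo (0 : ℝ) 1)
    (μ : Measure (E n)) [IsFiniteMeasure μ] (hμ : μ (sphere (0 : E n) 1)ᶜ = 0) :
    ∫⁻ ζ, ∫⁻ ξ, ENNReal.ofReal (Ph n (r • ζ) ξ) ∂μ ∂sphMeasure n = μ univ := by
  have := isProbabilityMeasure_sphMeasure (n := n) (by omega)
  rw [lintegral_lintegral_swap]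
  · rw [lintegral_congr_ae (g := fun _ => 1), lintegral_one]
    filter_upwards [show ∀ᵐ ξ ∂μ, ξ ∈ sphere (0 : E n) 1 from hμ] with ξ hξ
    exact lintegral_Ph_sphere hn hr (by simpa using hξ)
  · have : Measurable (Function.uncurry fun ζ ξ : E n => ENNReal.ofReal (Ph n (r • ζ) ξ)) := by
      unfold Ph Function.uncurry; fun_prop
    exact this.aemeasurable

/-- A Poisson integral has `L¹` means bounded by the total variation of the measure. -/
lemma hardy_of_poisson {n : ℕ} (hn : 3 ≤ n) {u : E n → ℝ} (μp μm : Measure (E n))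
    [IsFiniteMeasure μp] [IsFiniteMeasure μm] (hp : μp (sphere (0 : E n) 1)ᶜ = 0)
    (hm : μm (sphere (0 : E n) 1)ᶜ = 0)
    (hu : ∀ x ∈ ball (0 : E n) 1, u x = (∫ ξ, Ph n x ξ ∂μp) - ∫ ξ, Ph n x ξ ∂μm)
    {r : ℝ} (hr : r ∈ Ioo (0 : ℝ) 1) :
    ∫⁻ ζ, ENNReal.ofReal |u (r • ζ)| ∂sphMeasure n ≤ μp univ + μm univ := by
  rw [← lintegral_lintegral_Ph hn hr μp hp, ← lintegral_lintegral_Ph hn hr μm hm,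
    ← lintegral_add_left]
  · refine lintegral_mono_ae ?_
    filter_upwards [show ∀ᵐ ξ ∂sphMeasure n, ξ ∈ sphere (0 : E n) 1 from
      sphMeasure_compl_sphere n] with ζ hζ
    have hx : r • ζ ∈ ball (0 : E n) 1 := by
      have : ‖ζ‖ = 1 := by simpa using hζ
      simp [norm_smul, this, abs_of_pos hr.1, hr.2]
    have key : ∀ μ : Measure (E n), ENNReal.ofReal |∫ ξ, Ph n (r • ζ) ξ ∂μ|
        ≤ ∫⁻ ξ, ENNReal.ofReal (Ph n (r • ζ) ξ) ∂μ := fun μ => by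
      have h := enorm_integral_le_lintegral_enorm (μ := μ) (fun ξ => Ph n (r • ζ) ξ)
      simp only [Real.enorm_eq_ofReal_abs] at h
      simpa only [abs_of_nonneg (Ph_nonneg hx _)] using h
    rw [hu _ hx]
    calc _ ≤ ENNReal.ofReal (|∫ ξ, Ph n (r • ζ) ξ ∂μp| + |∫ ξ, Ph n (r • ζ) ξ ∂μm|) :=
          ENNReal.ofReal_le_ofReal (abs_sub _ _)
      _ ≤ _ := by
          rw [ENNReal.ofReal_add (abs_nonneg _) (abs_nonneg _)]
          exact add_le_add (key _) (key _)
  · have : Measurable (Function.uncurry fun ζ ξ : E n => ENNReal.ofReal (Ph n (r • ζ) ξ)) := by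
      unfold Ph Function.uncurry; fun_prop
    exact this.lintegral_prod_right'

/-! ### Regularization by averaging over rotations -/

lemma smul_mem_ball {n : ℕ} {R : ℝ} (hR : R ∈ Ioo (0 : ℝ) 1) {z : E n} (hz : ‖z‖ = 1) :
    R • z ∈ ball (0 : E n) 1 := by
  simp [norm_smul, hz, abs_of_pos hR.1, hR.2]

lemma continuous_comp_act {n : ℕ} {u : E n → ℝ} (hu : ContinuousOn u (ball 0 1)) {x : E n}
    (hx : x ∈ ball (0 : E n) 1) : Continuous fun k : OG n => u (act k x) :=
  hu.comp_continuous (continuous_act_left x) fun k => by simpa using hx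

lemma HHarm.continuousOn {n : ℕ} {w : E n → ℝ} (hw : HHarm w) : ContinuousOn w (ball 0 1) := by
  obtain ⟨w1, w2, h⟩ := hw
  exact fun x hx => (h x hx).1.continuousAt.continuousWithinAt

/-- The growth hypothesis, transported from the sphere to the orthogonal group. -/
lemma integral_act_le {n : ℕ} (hn : 1 ≤ n) {u : E n → ℝ} (hu : ContinuousOn u (ball 0 1))
    {M : ℝ≥0∞} (hM : M ≠ ⊤) {R : ℝ} (hR : R ∈ Ioo (0 : ℝ) 1)
    (h : ∫⁻ ζ, ENNReal.ofReal |u (R • ζ)| ∂sphMeasure n ≤ M) {z : E n} (hz : ‖z‖ = 1) :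
    ∫ k, |u (act k (R • z))| ∂haarO n ≤ M.toReal := by
  have hc := continuous_comp_act hu (smul_mem_ball hR hz)
  rw [integral_eq_lintegral_of_nonneg_ae (Eventually.of_forall fun k => abs_nonneg _)
    hc.abs.aestronglyMeasurable]
  refine ENNReal.toReal_mono hM (le_trans (le_of_eq ?_) h)
  -- `u` is only known to be continuous on the ball, hence the cut-off outside the sphere
  classical
  let f : E n → ℝ≥0∞ := (sphere (0 : E n) 1).piecewise
    (fun ζ => ENNReal.ofReal |u (R • ζ)|) fun _ => 0
  have hf : Measurable f := by
    refine ContinuousOn.measurable_piecewise ?_ continuousOn_const isClosed_sphere.measurableSet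
    refine ENNReal.continuous_ofReal.comp_continuousOn (ContinuousOn.abs ?_)
    exact hu.comp (by fun_prop) fun ζ hζ => smul_mem_ball hR (by simpa using hζ)
  have h1 := lintegral_act hn f hf z hz
  have h2 : ∫⁻ ζ, f ζ ∂sphMeasure n = ∫⁻ ζ, ENNReal.ofReal |u (R • ζ)| ∂sphMeasure n := by
    refine lintegral_congr_ae ?_
    filter_upwards [show ∀ᵐ ξ ∂sphMeasure n, ξ ∈ sphere (0 : E n) 1 from
      sphMeasure_compl_sphere n] with ζ hζ
    exact piecewise_eq_of_mem _ _ _ hζ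
  rw [← h2, ← h1]
  refine lintegral_congr fun k => ?_
  have : act k z ∈ sphere (0 : E n) 1 := by simp [hz]
  simp only [f, piecewise_eq_of_mem _ _ _ this, map_smul]

lemma abs_integral_mul_le {n : ℕ} {f h : OG n → ℝ} (hf : Continuous f) (hh : Continuous h)
    {a C : ℝ} (ha : 0 ≤ a) (hfa : ∀ k, |f k| ≤ a) (hC : ∫ k, |h k| ∂haarO n ≤ C) :
    |∫ k, f k * h k ∂haarO n| ≤ a * C := by
  calc |∫ k, f k * h k ∂haarO n| ≤ ∫ k, |f k * h k| ∂haarO n := abs_integral_le_integral_abs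
    _ ≤ ∫ k, a * |h k| ∂haarO n := by
        refine integral_mono (integrable_OG _ (hf.mul hh).abs)
          (integrable_OG _ (continuous_const.mul hh.abs)) fun k => ?_
        simp only [abs_mul]
        exact mul_le_mul_of_nonneg_right (hfa k) (abs_nonneg _)
    _ = a * ∫ k, |h k| ∂haarO n := integral_const_mul _ _
    _ ≤ a * C := mul_le_mul_of_nonneg_left hC ha

section average
variable {n : ℕ} {u : E n → ℝ} {C : ℝ}

/-- Averaging against a continuous function on the orthogonal group regularizes: the restrictions
of the average to the spheres of radius `R < 1` are equicontinuous. -/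
lemma average_equicontinuous (hu : ContinuousOn u (ball 0 1)) (hC0 : 0 ≤ C)
    (hC : ∀ R ∈ Ioo (0 : ℝ) 1, ∀ z : E n, ‖z‖ = 1 → ∫ k, |u (act k (R • z))| ∂haarO n ≤ C)
    {φ : OG n → ℝ} (hφ : Continuous φ) {ε : ℝ} (hε : 0 < ε) :
    ∃ δ > 0, ∀ R ∈ Ioo (0 : ℝ) 1, ∀ ζ η : E n, ‖ζ‖ = 1 → ‖η‖ = 1 → ‖η - ζ‖ < δ →
      |∫ k, φ k * u (act k (R • η)) ∂haarO n - ∫ k, φ k * u (act k (R • ζ)) ∂haarO n| ≤ ε := by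
  have h1 : ∀ᶠ g : OG n in 𝓝 1, ∀ k ∈ (univ : Set (OG n)), |φ (k * g⁻¹) - φ k| < ε / (C + 1) := by
    refine isCompact_univ.eventually_forall_of_forall_eventually fun k _ => ?_
    have hc : Continuous fun p : OG n × OG n => |φ (p.2 * p.1⁻¹) - φ p.2| :=
      ((hφ.comp (continuous_snd.mul continuous_fst.inv)).sub (hφ.comp continuous_snd)).abs
    refine hc.continuousAt.eventually_lt continuousAt_const ?_
    simp only [inv_one, mul_one, sub_self, abs_zero]
    positivity
  obtain ⟨δ, hδ, hδ'⟩ := Metric.eventually_nhds_iff.1 h1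
  refine ⟨min 1 (δ / 4), by positivity, fun R hR ζ η hζ hη hd => ?_⟩
  -- moving the base point by `g` amounts to translating `φ`
  obtain ⟨g, rfl, hg⟩ := exists_act_eq_of_close ζ η hζ hη (hd.le.trans (min_le_left _ _))
  have hg' : dist g 1 < δ := by
    have := hd.trans_le (min_le_right _ _)
    linarith
  have hx := smul_mem_ball hR hζ
  have hcu := continuous_comp_act hu hx
  have e1 : ∫ k, φ k * u (act k (R • act g ζ)) ∂haarO n
      = ∫ k, φ (k * g⁻¹) * u (act k (R • ζ)) ∂haarO n := by
    rw [← integral_mul_right_eq_self _ g⁻¹]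
    simp only [← map_smul, ← act_mul, inv_mul_cancel_right]
  have c1 : Continuous fun k : OG n => φ (k * g⁻¹) := hφ.comp (continuous_mul_const g⁻¹)
  have i1 : Integrable (fun k : OG n => φ (k * g⁻¹) * u (act k (R • ζ))) (haarO n) :=
    integrable_OG _ (c1.mul hcu)
  have i2 : Integrable (fun k : OG n => φ k * u (act k (R • ζ))) (haarO n) :=
    integrable_OG _ (hφ.mul hcu)
  rw [e1, ← integral_sub i1 i2]
  simp only [← sub_mul]
  refine (abs_integral_mul_le (c1.sub hφ) hcu (a := ε / (C + 1)) (by positivity)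
    (fun k => (hδ' hg' k (mem_univ _)).le) (hC R hR ζ hζ)).trans ?_
  rw [div_mul_eq_mul_div, div_le_iff₀ (by positivity)]
  nlinarith

/-- Away from the point `ζ` the Poisson kernel at `Rζ` is small when `R` is close to `1`. -/
lemma Ph_le_of_dist {n : ℕ} {δ R : ℝ} (hδ : 0 < δ) (hR : R ∈ Ioo (0 : ℝ) 1) (hR' : 1 - R ≤ δ / 2)
    {ζ η : E n} (hζ : ‖ζ‖ = 1) (hd : δ ≤ ‖η - ζ‖) :
    Ph n (R • ζ) η ≤ ((1 - R ^ 2) / (δ / 2) ^ 2) ^ (n - 1) := by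
  have hRn : ‖R • ζ‖ = R := by simp [norm_smul, hζ, abs_of_pos hR.1]
  have h1 : ‖η - ζ‖ ≤ ‖R • ζ - η‖ + (1 - R) := by
    have : η - ζ = -(R • ζ - η) + (R - 1) • ζ := by module
    rw [this]
    refine (norm_add_le _ _).trans ?_
    rw [norm_neg, norm_smul, hζ, Real.norm_eq_abs, abs_of_neg (by linarith [hR.2])]
    linarith
  have h2 : δ / 2 ≤ ‖R • ζ - η‖ := by linarith
  have h3 : 0 ≤ 1 - R ^ 2 := by nlinarith [hR.1, hR.2]
  rw [Ph, hRn]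
  gcongr

/-- Let `w` be an average of `u`. The Poisson integral of the boundary function `ζ ↦ w(Rζ)` tends
to `w` as `R → 1`. On the sphere of radius `R` the two functions are close by the usual approximate
identity argument, uniformly because of the equicontinuity of the averages; on the ball of radius `R`
they are then close by the maximum principle. -/
lemma tendsto_poisson_average (hn : 3 ≤ n) (hu : ContDiffOn ℝ 2 u (ball (0 : E n) 1))
    (hH : HHarmonic n u) (hC0 : 0 ≤ C)
    (hC : ∀ R ∈ Ioo (0 : ℝ) 1, ∀ z : E n, ‖z‖ = 1 → ∫ k, |u (act k (R • z))| ∂haarO n ≤ C)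
    {φ : OG n → ℝ} (hφ : Continuous φ) {e : E n} (he : ‖e‖ = 1) {x : E n}
    (hx : x ∈ ball (0 : E n) 1) :
    Tendsto (fun R : ℝ => ∫ g, (∫ k, φ k * u (act k (R • act g e)) ∂haarO n) * Ph n x (act g e)
      ∂haarO n) (𝓝[<] 1) (𝓝 (∫ k, φ k * u (act k x) ∂haarO n)) := by
  set w : E n → ℝ := fun x => ∫ k, φ k * u (act k x) ∂haarO n with hwdef
  have hw : HHarm w := hharm_average hu hH hφ
  obtain ⟨c, hc⟩ := isCompact_univ.exists_bound_of_continuousOn hφ.continuousOn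
  have hc : ∀ k, |φ k| ≤ c := fun k => hc k (mem_univ k)
  have hc0 : 0 ≤ c := (abs_nonneg _).trans (hc 1)
  have hbd : ∀ R ∈ Ioo (0 : ℝ) 1, ∀ ζ : E n, ‖ζ‖ = 1 → |w (R • ζ)| ≤ c * C := fun R hR ζ hζ =>
    abs_integral_mul_le hφ (continuous_comp_act hu.continuousOn (smul_mem_ball hR hζ)) hc0 hc
      (hC R hR ζ hζ)
  have hwc : ∀ R ∈ Ioo (0 : ℝ) 1, Continuous fun g : OG n => w (R • act g e) := fun R hR =>
    hw.continuousOn.comp_continuous ((continuous_act_left e).const_smul R) fun g =>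
      smul_mem_ball hR (by simp [he])
  have hxn : ‖x‖ < 1 := by simpa using hx
  rw [Metric.tendsto_nhds]
  intro ε hε
  obtain ⟨δ, hδ, hequi⟩ := average_equicontinuous hu.continuousOn hC0 hC hφ
    (show 0 < ε / 4 by positivity)
  have hIoo : ∀ᶠ R : ℝ in 𝓝[<] 1, R ∈ Ioo (0 : ℝ) 1 := Ioo_mem_nhdsLT one_pos
  have hlim : Tendsto (fun R : ℝ => 2 * (c * C) * ((1 - R ^ 2) / (δ / 2) ^ 2) ^ (n - 1))
      (𝓝[<] 1) (𝓝 0) := by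
    have h : Continuous fun R : ℝ => 2 * (c * C) * ((1 - R ^ 2) / (δ / 2) ^ 2) ^ (n - 1) := by
      fun_prop
    have h2 := h.tendsto 1
    simp only [one_pow, sub_self, zero_div, zero_pow (show n - 1 ≠ 0 by omega), mul_zero] at h2
    exact h2.mono_left nhdsWithin_le_nhds
  have hclose : ∀ᶠ R : ℝ in 𝓝[<] 1, 1 - δ / 2 < R :=
    nhdsWithin_le_nhds (lt_mem_nhds (by linarith))
  have hxR : ∀ᶠ R : ℝ in 𝓝[<] 1, ‖x‖ < R := nhdsWithin_le_nhds (lt_mem_nhds hxn)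
  filter_upwards [hIoo, hlim.eventually (gt_mem_nhds (show 0 < ε / 4 by positivity)), hclose, hxR]
    with R hR hR2 hR3 hR4
  set Q : E n → ℝ := fun y => ∫ g, w (R • act g e) * Ph n y (act g e) ∂haarO n with hQdef
  have hQ : HHarm Q := hharm_kernel hn (haarO n) (hwc R hR) he
  have hbdry : ∀ y : E n, ‖y‖ = R → |Q y - w y| ≤ ε / 2 := by
    intro y hy
    obtain ⟨ζ, hζ, rfl⟩ : ∃ ζ : E n, ‖ζ‖ = 1 ∧ y = R • ζ := by
      refine ⟨R⁻¹ • y, ?_, ?_⟩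
      · rw [norm_smul, hy, Real.norm_eq_abs, abs_of_pos (inv_pos.2 hR.1), inv_mul_cancel₀ hR.1.ne']
      · rw [smul_smul, mul_inv_cancel₀ hR.1.ne', one_smul]
    have hb := smul_mem_ball hR hζ
    have hP := continuous_Ph_act he hb
    have e1 : Q (R • ζ) - w (R • ζ)
        = ∫ g, (w (R • act g e) - w (R • ζ)) * Ph n (R • ζ) (act g e) ∂haarO n := by
      have : w (R • ζ) = ∫ g, w (R • ζ) * Ph n (R • ζ) (act g e) ∂haarO n := by
        rw [integral_const_mul, integral_Ph_act hn he hb, mul_one]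
      have hi1 : Integrable (fun g => w (R • act g e) * Ph n (R • ζ) (act g e)) (haarO n) :=
        integrable_OG _ ((hwc R hR).mul hP)
      conv_lhs => rw [this, hQdef]
      rw [← integral_sub hi1 (integrable_OG _ (by fun_prop))]
      simp only [sub_mul]
    rw [e1]
    set t := 2 * (c * C) * ((1 - R ^ 2) / (δ / 2) ^ 2) ^ (n - 1) with ht
    have ht0 : 0 ≤ t := by
      have : 0 ≤ 1 - R ^ 2 := by nlinarith [hR.1, hR.2]
      positivity
    calc |∫ g, (w (R • act g e) - w (R • ζ)) * Ph n (R • ζ) (act g e) ∂haarO n|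
        ≤ ∫ g, |(w (R • act g e) - w (R • ζ)) * Ph n (R • ζ) (act g e)| ∂haarO n :=
          abs_integral_le_integral_abs
      _ ≤ ∫ g, (ε / 4 * Ph n (R • ζ) (act g e) + t) ∂haarO n := by
          refine integral_mono (integrable_OG _ ?_) (integrable_OG _ (by fun_prop)) fun g => ?_
          · exact (((hwc R hR).sub continuous_const).mul hP).abs
          · have hP0 := Ph_nonneg hb (act g e)
            simp only [abs_mul, abs_of_nonneg hP0]
            have hge : ‖act g e‖ = 1 := by simp [he]
            rcases lt_or_ge ‖act g e - ζ‖ δ with hlt | hge'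
            · have := mul_le_mul_of_nonneg_right (hequi R hR ζ _ hζ hge hlt) hP0
              linarith
            · have h1 := Ph_le_of_dist hδ hR (by linarith) hζ hge'
              have h2 : |w (R • act g e) - w (R • ζ)| ≤ 2 * (c * C) := by
                have := abs_sub (w (R • act g e)) (w (R • ζ))
                linarith [hbd R hR _ hge, hbd R hR ζ hζ]
              have h3 := mul_le_mul h2 h1 hP0 (by positivity)
              have h4 : 0 ≤ ε / 4 * Ph n (R • ζ) (act g e) := by positivity
              linarith
      _ = ε / 4 + t := by
          rw [integral_add (integrable_OG _ (by fun_prop)) (integrable_const _),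
            integral_const_mul, integral_Ph_act hn he hb]
          simp
      _ ≤ ε / 2 := by linarith
  have hup := (hQ.sub hw).le_of_sphere (by omega) hR.1 hR.2
    (fun y hy => (abs_le.1 (hbdry y hy)).2) hR4.le
  have hlo := (hw.sub hQ).le_of_sphere (by omega) hR.1 hR.2 (c := ε / 2)
    (fun y hy => by have := (abs_le.1 (hbdry y hy)).1; linarith) hR4.le
  rw [Real.dist_eq, abs_lt]
  constructor <;> linarith

end average

/-! ### Weak limits and the representation theorem -/

/-- Weak compactness: nonnegative densities of bounded mass on the orthogonal group converge
weakly along an ultrafilter. -/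
lemma exists_weak_limit {n : ℕ} (F : Ultrafilter ℝ) {h : ℝ → OG n → ℝ} {C : ℝ}
    (hc : ∀ R, Continuous (h R)) (h0 : ∀ R k, 0 ≤ h R k) (hC : ∀ R, ∫ k, h R k ∂haarO n ≤ C) :
    ∃ ν : Measure (OG n), IsFiniteMeasure ν ∧ ∀ Ψ : OG n → ℝ, Continuous Ψ →
      Tendsto (fun R => ∫ k, Ψ k * h R k ∂haarO n) F (𝓝 (∫ k, Ψ k ∂ν)) := by
  have hmass : ∀ R, (haarO n).withDensity (fun k => ENNReal.ofReal (h R k)) univ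
      ≤ ENNReal.ofReal C := fun R => by
    rw [withDensity_apply _ MeasurableSet.univ, Measure.restrict_univ,
      ← ofReal_integral_eq_lintegral_ofReal (integrable_OG _ (hc R)) (Eventually.of_forall (h0 R))]
    exact ENNReal.ofReal_le_ofReal (hC R)
  let m : ℝ → FiniteMeasure (OG n) := fun R =>
    ⟨(haarO n).withDensity (fun k => ENNReal.ofReal (h R k)),
      ⟨(hmass R).trans_lt ENNReal.ofReal_lt_top⟩⟩
  have hm : ∀ R, (m R).mass ≤ C.toNNReal := fun R => by
    rw [← ENNReal.coe_le_coe, FiniteMeasure.ennreal_mass]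
    exact hmass R
  have hK := isCompact_setOfPred_finiteMeasure_le_of_compactSpace (OG n) C.toNNReal
  obtain ⟨ν, -, hν⟩ := hK.ultrafilter_le_nhds' (F.map m)
    (Eventually.of_forall hm : ∀ᶠ R in (F : Filter ℝ), (m R).mass ≤ C.toNNReal)
  refine ⟨ν, inferInstance, fun Ψ hΨ => ?_⟩
  have ht : Tendsto m F (𝓝 ν) := hν
  have := FiniteMeasure.tendsto_iff_forall_integral_tendsto.1 ht
    (BoundedContinuousFunction.mkOfCompact ⟨Ψ, hΨ⟩)
  refine (this.congr fun R => ?_)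
  have e : ((m R : FiniteMeasure (OG n)) : Measure (OG n))
      = (haarO n).withDensity (fun k => ENNReal.ofReal (h R k)) := rfl
  rw [e, integral_withDensity_eq_integral_toReal_smul (by have := hc R; fun_prop)
    (Eventually.of_forall fun _ => ENNReal.ofReal_lt_top)]
  refine integral_congr_ae (Eventually.of_forall fun k => ?_)
  simp [ENNReal.toReal_ofReal (h0 R k), mul_comm]

lemma integral_swap_OG {n : ℕ} (μ ν : Measure (OG n)) [IsFiniteMeasure μ] [IsFiniteMeasure ν]
    {f : OG n → OG n → ℝ} (hf : Continuous f.uncurry) :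
    ∫ x, ∫ y, f x y ∂ν ∂μ = ∫ y, ∫ x, f x y ∂μ ∂ν :=
  integral_integral_swap_of_hasCompactSupport hf (HasCompactSupport.of_compactSpace _)

lemma integral_mul_sub_OG {n : ℕ} {φ a b : OG n → ℝ} (hφ : Continuous φ) (ha : Continuous a)
    (hb : Continuous b) :
    ∫ k, φ k * a k ∂haarO n - ∫ k, φ k * b k ∂haarO n = ∫ k, φ k * (a k - b k) ∂haarO n := by
  simp only [mul_sub]
  exact (integral_sub (integrable_OG _ (hφ.mul ha)) (integrable_OG _ (hφ.mul hb))).symm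

/-- The Poisson kernel with pole `g e`, its point `x` averaged over rotations against the
weight `φ`. -/
def Psi {n : ℕ} (φ : OG n → ℝ) (e x : E n) (g : OG n) : ℝ :=
  ∫ k, φ k * Ph n (act k x) (act g e) ∂haarO n

section
variable {n : ℕ} {φ : OG n → ℝ} {e x : E n}

lemma continuous_Ph_act_act (he : ‖e‖ = 1) (hx : x ∈ ball (0 : E n) 1) :
    Continuous fun p : OG n × OG n => Ph n (act p.1 x) (act p.2 e) := by
  refine (continuousOn_Ph_act he).comp_continuous
    (f := fun p : OG n × OG n => (act p.1 x, p.2)) ?_ fun p => ⟨by simpa using hx, mem_univ _⟩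
  exact ((continuous_act_left x).comp continuous_fst).prodMk continuous_snd

/-- The version of `continuous_Ph_act_act` with the two group variables exchanged. -/
lemma continuous_Ph_act_act' (he : ‖e‖ = 1) (hx : x ∈ ball (0 : E n) 1) :
    Continuous fun p : OG n × OG n => Ph n (act p.2 x) (act p.1 e) := by
  refine (continuousOn_Ph_act he).comp_continuous
    (f := fun p : OG n × OG n => (act p.2 x, p.1)) ?_ fun p => ⟨by simpa using hx, mem_univ _⟩
  exact ((continuous_act_left x).comp continuous_snd).prodMk continuous_fst

lemma continuous_Psi (hφ : Continuous φ) (he : ‖e‖ = 1) (hx : x ∈ ball (0 : E n) 1) :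
    Continuous (Psi φ e x) := by
  have hc : Continuous (Function.uncurry fun g k : OG n => φ k * Ph n (act k x) (act g e)) :=
    (hφ.comp continuous_snd).mul (continuous_Ph_act_act' he hx)
  have := continuous_parametric_integral_of_continuous (μ := haarO n) hc isCompact_univ
  simp only [Measure.restrict_univ] at this
  exact this

/-- Averaging commutes with the Poisson integral, by Fubini and the change of variables
`g ↦ k g`, because the kernel is invariant under simultaneous rotations. -/
lemma poisson_average_eq (hφ : Continuous φ) (he : ‖e‖ = 1) (hx : x ∈ ball (0 : E n) 1)
    {u : E n → ℝ} (hu : ContinuousOn u (ball 0 1)) {R : ℝ} (hR : R ∈ Ioo (0 : ℝ) 1) :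
    ∫ g, (∫ k, φ k * u (act k (R • act g e)) ∂haarO n) * Ph n x (act g e) ∂haarO n
      = ∫ g, Psi φ e x g * u (act g (R • e)) ∂haarO n := by
  have hcu := continuous_comp_act hu (smul_mem_ball hR he)
  have hc1 : Continuous (Function.uncurry fun g k : OG n =>
      φ k * (u (act (k * g) (R • e)) * Ph n x (act g e))) :=
    (hφ.comp continuous_snd).mul ((hcu.comp (continuous_snd.mul continuous_fst)).mul
      ((continuous_Ph_act he hx).comp continuous_fst))
  have hc2 : Continuous (Function.uncurry fun k g : OG n =>
      φ k * (u (act g (R • e)) * Ph n (act k x) (act g e))) :=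
    (hφ.comp continuous_fst).mul ((hcu.comp continuous_snd).mul (continuous_Ph_act_act he hx))
  calc _ = ∫ g, ∫ k, φ k * (u (act (k * g) (R • e)) * Ph n x (act g e)) ∂haarO n ∂haarO n := by
        refine integral_congr_ae (Eventually.of_forall fun g => ?_)
        simp only [← integral_mul_const, ← map_smul, act_mul, mul_assoc]
    _ = ∫ k, ∫ g, φ k * (u (act (k * g) (R • e)) * Ph n x (act g e)) ∂haarO n ∂haarO n :=
        integral_swap_OG _ _ hc1
    _ = ∫ k, ∫ g, φ k * (u (act g (R • e)) * Ph n (act k x) (act g e)) ∂haarO n ∂haarO n := by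
        refine integral_congr_ae (Eventually.of_forall fun k => ?_)
        simp only
        rw [← integral_mul_left_eq_self (fun g => φ k * (u (act g (R • e)) *
          Ph n (act k x) (act g e))) k]
        simp only [act_mul, Ph_act]
    _ = ∫ g, ∫ k, φ k * (u (act g (R • e)) * Ph n (act k x) (act g e)) ∂haarO n ∂haarO n :=
        integral_swap_OG _ _ hc2
    _ = _ := by
        refine integral_congr_ae (Eventually.of_forall fun g => ?_)
        simp only [Psi, ← integral_mul_const]
        refine integral_congr_ae (Eventually.of_forall fun k => ?_)
        simp only
        ring

lemma integral_Psi (hφ : Continuous φ) (he : ‖e‖ = 1) (hx : x ∈ ball (0 : E n) 1)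
    (ν : Measure (OG n)) [IsFiniteMeasure ν] :
    ∫ g, Psi φ e x g ∂ν = ∫ k, φ k * ∫ g, Ph n (act k x) (act g e) ∂ν ∂haarO n := by
  have hc : Continuous (Function.uncurry fun g k : OG n => φ k * Ph n (act k x) (act g e)) :=
    (hφ.comp continuous_snd).mul (continuous_Ph_act_act' he hx)
  simp only [Psi, ← integral_const_mul]
  exact integral_swap_OG _ _ hc

end

/-- The representation theorem with measures on `O(n)` instead of the sphere: `νp` and `νm` are weak
limits, as `R → 1`, of the positive and negative parts of the functions `g ↦ u(R g e)`. -/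
lemma exists_measure_OG {n : ℕ} (hn : 3 ≤ n) {u : E n → ℝ} {C : ℝ}
    (hu : ContDiffOn ℝ 2 u (ball (0 : E n) 1))
    (hH : HHarmonic n u) (hC0 : 0 ≤ C)
    (hC : ∀ R ∈ Ioo (0 : ℝ) 1, ∀ z : E n, ‖z‖ = 1 → ∫ k, |u (act k (R • z))| ∂haarO n ≤ C)
    {e : E n} (he : ‖e‖ = 1) :
    ∃ νp νm : Measure (OG n), IsFiniteMeasure νp ∧ IsFiniteMeasure νm ∧
      ∀ x ∈ ball (0 : E n) 1,
        u x = ∫ g, Ph n x (act g e) ∂νp - ∫ g, Ph n x (act g e) ∂νm := by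
  classical
  let F : Ultrafilter ℝ := Ultrafilter.of (𝓝[<] (1 : ℝ))
  have hF : (F : Filter ℝ) ≤ 𝓝[<] 1 := Ultrafilter.of_le _
  have hIoo : ∀ᶠ R : ℝ in (F : Filter ℝ), R ∈ Ioo (0 : ℝ) 1 := hF (Ioo_mem_nhdsLT one_pos)
  -- densities of the dilates `u(R ·)`, set to zero for irrelevant values of `R`
  let U : ℝ → OG n → ℝ := fun R g => if R ∈ Ioo (0 : ℝ) 1 then u (act g (R • e)) else 0
  have hUc : ∀ R, Continuous (U R) := fun R => by
    by_cases hR : R ∈ Ioo (0 : ℝ) 1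
    · simp only [U, if_pos hR]
      exact continuous_comp_act hu.continuousOn (smul_mem_ball hR he)
    · simp only [U, if_neg hR]
      exact continuous_const
  have hUC : ∀ R, ∫ g, |U R g| ∂haarO n ≤ C := fun R => by
    by_cases hR : R ∈ Ioo (0 : ℝ) 1
    · simp only [U, if_pos hR]
      exact hC R hR e he
    · simp only [U, if_neg hR]
      simpa using hC0
  have hpc : ∀ R, Continuous fun g => max (U R g) 0 := fun R => (hUc R).max continuous_const
  have hmc : ∀ R, Continuous fun g => max (-U R g) 0 := fun R => (hUc R).neg.max continuous_const
  obtain ⟨νp, hνp, hp⟩ := exists_weak_limit F (h := fun R g => max (U R g) 0)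
    hpc (fun R g => le_max_right _ _)
    (fun R => (integral_mono (integrable_OG _ (hpc R)) (integrable_OG _ (hUc R).abs)
      fun g => max_le (le_abs_self _) (abs_nonneg _)).trans (hUC R))
  obtain ⟨νm, hνm, hm⟩ := exists_weak_limit F (h := fun R g => max (-U R g) 0)
    hmc (fun R g => le_max_right _ _)
    (fun R => (integral_mono (integrable_OG _ (hmc R)) (integrable_OG _ (hUc R).abs)
      fun g => max_le (neg_le_abs _) (abs_nonneg _)).trans (hUC R))
  refine ⟨νp, νm, hνp, hνm, fun x hx => ?_⟩
  have hlim : ∀ Ψ : OG n → ℝ, Continuous Ψ →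
      Tendsto (fun R : ℝ => ∫ g, Ψ g * u (act g (R • e)) ∂haarO n) F
        (𝓝 (∫ g, Ψ g ∂νp - ∫ g, Ψ g ∂νm)) := by
    intro Ψ hΨ
    refine ((hp Ψ hΨ).sub (hm Ψ hΨ)).congr' ?_
    filter_upwards [hIoo] with R hR
    rw [integral_mul_sub_OG hΨ (hpc R) (hmc R)]
    refine integral_congr_ae (Eventually.of_forall fun g => ?_)
    have h1 : max (U R g) 0 - max (-U R g) 0 = U R g := by
      rcases le_total 0 (U R g) with h | h
      · rw [max_eq_left h, max_eq_right (by linarith)]; ring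
      · rw [max_eq_right h, max_eq_left (by linarith)]; ring
    simp only [h1]
    simp only [U, if_pos hR]
  let v : E n → ℝ := fun y => ∫ g, Ph n y (act g e) ∂νp - ∫ g, Ph n y (act g e) ∂νm
  have hv : HHarm v := by
    have h1 := hharm_kernel hn νp (g := fun _ => 1) continuous_const he
    have h2 := hharm_kernel hn νm (g := fun _ => 1) continuous_const he
    simpa only [one_mul] using h1.sub h2
  have hI : ∀ ν : Measure (OG n), IsFiniteMeasure ν →
      Continuous fun k : OG n => ∫ g, Ph n (act k x) (act g e) ∂ν := by
    intro ν hν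
    have h1 := (hharm_kernel hn ν (g := fun _ => 1) continuous_const he).continuousOn
    simpa only [one_mul] using continuous_comp_act h1 hx
  -- the averages of `u` are recovered from the weak limits, hence agree with those of `v`
  have hkey : ∀ φ : OG n → ℝ, Continuous φ →
      ∫ k, φ k * u (act k x) ∂haarO n = ∫ k, φ k * v (act k x) ∂haarO n := by
    intro φ hφ
    have t1 := (tendsto_poisson_average hn hu hH hC0 hC hφ he hx).mono_left hF
    have t2 := hlim _ (continuous_Psi hφ he hx)
    have t3 := t1.congr' (hIoo.mono fun R hR => poisson_average_eq hφ he hx hu.continuousOn hR)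
    rw [tendsto_nhds_unique t3 t2, integral_Psi hφ he hx, integral_Psi hφ he hx,
      integral_mul_sub_OG hφ (hI νp hνp) (hI νm hνm)]
  -- `φ = u(· x) - v(· x)` on the group turns the identity of averages into a vanishing square
  have hcu := continuous_comp_act hu.continuousOn hx
  have hcv := continuous_comp_act hv.continuousOn hx
  have hφ : Continuous fun k : OG n => u (act k x) - v (act k x) := hcu.sub hcv
  have h0 : ∫ k, (u (act k x) - v (act k x)) ^ 2 ∂haarO n = 0 := by
    have h1 := hkey _ hφ
    rw [← sub_eq_zero, integral_mul_sub_OG hφ hcu hcv] at h1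
    rw [← h1]
    refine integral_congr_ae (Eventually.of_forall fun k => ?_)
    simp only
    ring
  have hsq : Continuous fun k : OG n => (u (act k x) - v (act k x)) ^ 2 := hφ.pow 2
  rw [integral_eq_zero_iff_of_nonneg (fun k => sq_nonneg _) (integrable_OG _ hsq),
    hsq.ae_eq_iff_eq _ continuous_zero] at h0
  have h1 := congrFun h0 1
  simp only [act_one, Pi.zero_apply] at h1
  exact sub_eq_zero.1 (pow_eq_zero_iff two_ne_zero |>.1 h1)

lemma measurable_Ph {n : ℕ} (x : E n) : Measurable (Ph n x) := by
  unfold Ph; fun_prop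

/-- For `u` `H`-harmonic on `B_n`, `sup_{0<r<1} ∫ |u(rζ)| dσ(ζ) < ∞` iff there
is a finite signed Borel measure `μ` on `S^{n-1}` (written via its Jordan decomposition
`μ = μp - μm` into finite measures carried by the sphere) with `u = P_h[μ]` on `B_n`. -/
theorem stmt4 (n : ℕ) (hn : 3 ≤ n) (u : E n → ℝ)
    (hu : ContDiffOn ℝ 2 u (ball (0 : E n) 1)) (hH : HHarmonic n u) :
    (∃ M : ℝ≥0∞, M ≠ ⊤ ∧ ∀ r ∈ Ioo (0 : ℝ) 1,
        (∫⁻ ζ, ENNReal.ofReal |u (r • ζ)| ∂(sphMeasure n)) ≤ M) ↔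
      ∃ μp μm : Measure (E n), IsFiniteMeasure μp ∧ IsFiniteMeasure μm ∧
        μp (sphere (0 : E n) 1)ᶜ = 0 ∧ μm (sphere (0 : E n) 1)ᶜ = 0 ∧
        ∀ x ∈ ball (0 : E n) 1, u x = (∫ ξ, Ph n x ξ ∂μp) - ∫ ξ, Ph n x ξ ∂μm := by
  constructor
  · rintro ⟨M, hM, h⟩
    let e : E n := EuclideanSpace.single (⟨0, by omega⟩ : Fin n) 1
    have he : ‖e‖ = 1 := by simp [e]
    obtain ⟨νp, νm, hνp, hνm, hrep⟩ := exists_measure_OG hn hu hH ENNReal.toReal_nonneg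
      (fun R hR z hz => integral_act_le (by omega) hu.continuousOn hM hR (h R hR) hz) he
    have hme : Measurable fun g : OG n => act g e := (continuous_act_left e).measurable
    have hsph : ∀ ν : Measure (OG n), (ν.map fun g => act g e) (sphere (0 : E n) 1)ᶜ = 0 := by
      intro ν
      rw [Measure.map_apply hme isClosed_sphere.measurableSet.compl]
      convert measure_empty (μ := ν)
      ext g
      simp [he]
    refine ⟨νp.map fun g => act g e, νm.map fun g => act g e, inferInstance, inferInstance,
      hsph _, hsph _, fun x hx => ?_⟩
    rw [integral_map hme.aemeasurable (measurable_Ph x).aestronglyMeasurable,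
      integral_map hme.aemeasurable (measurable_Ph x).aestronglyMeasurable]
    exact hrep x hx
  · rintro ⟨μp, μm, hp, hm, hps, hms, hrep⟩
    refine ⟨μp univ + μm univ, by simp, fun r hr => hardy_of_poisson hn μp μm hps hms hrep hr⟩
end
end

section
/- Let F be C² on [1/2,1) and let h be C¹ on [1/2,1) extending continuously to [1/2,1] with h(1) ≥ 0. Assume there are constants C > 0 and α > 1 such that |F''(x) + (h(x)/(1-x))F'(x)| ≤ C(1-x)^{-α} for all x ∈ [1/2,1). Then: (1) if α > 2, F(x) = O((1-x)^{-α+1}) as x → 1⁻; (2) if 1 < α < 2, the limit lim_{x→1⁻} F(x) exists and is finite. -/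
/-! The function `F'` solves a first-order linear differential inequality, and `F'` is bounded by
the barrier `B(x) = K (1-x)^{1-α}`. Near `1` the continuous `h` is at least `-(α-1)/2`, so
at a point where `F' = B` one has
`F'' ≤ (C + K (α-1)/2) (1-x)^{-α} < K (α-1) (1-x)^{-α} = B'` once `K` is large;
hence `F'` cannot cross `B`, and likewise `-F'` (`abs_le_barrier`).
Integrating `|F'| ≤ K (1-x)^{1-α}` gives both claims. For the growth bound the same barrier lemma is
applied to `F` with `h = 0`, which suffices because `(1-x)^{1-α} ≤ (1-x)^{-α}`. For `α < 2` the bound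
has the bounded primitive `P(x) = -K/(2-α) (1-x)^{2-α}`, which tends to `0`; then `F + P` is monotone
and, as `F - P` is antitone, bounded above, so `F` has a limit. -/

open Filter Topology Set

/-- The derivative of the barrier `K (1-x)^{b}`. -/
lemma hasDerivAt_barrier (K b : ℝ) {x : ℝ} (hx : x < 1) :
    HasDerivAt (fun x : ℝ => K * (1 - x) ^ b) (-(K * b) * (1 - x) ^ (b - 1)) x := by
  have h1 : HasDerivAt (fun x : ℝ => 1 - x) (-1) x := by
    simpa using (hasDerivAt_id x).const_sub 1
  have h2 := (h1.rpow_const (p := b) (Or.inl (by linarith))).const_mul K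
  exact h2.congr_deriv (by ring)

/-- One-sided comparison: a function obeying the differential inequality and starting below the
barrier stays below it. -/
lemma le_barrier {f f' h : ℝ → ℝ} {C α a K : ℝ}
    (hf : ∀ x ∈ Ico a 1, HasDerivWithinAt f (f' x) (Ico a 1) x)
    (hh : ∀ x ∈ Ico a 1, -((α - 1) / 2) ≤ h x)
    (hbound : ∀ x ∈ Ico a 1, |f' x + (h x / (1 - x)) * f x| ≤ C * (1 - x) ^ (-α))
    (hK0 : 0 ≤ K) (hK : C < K * ((α - 1) / 2)) (hKa : f a ≤ K * (1 - a) ^ (1 - α)) :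
    ∀ x ∈ Ico a 1, f x ≤ K * (1 - x) ^ (1 - α) := by
  intro y hy
  have hsub : Icc a y ⊆ Ico a 1 := fun x hx => ⟨hx.1, hx.2.trans_lt hy.2⟩
  refine image_le_of_deriv_right_lt_deriv_boundary' (a := a) (b := y) (f := f) (f' := f')
    (B := fun x => K * (1 - x) ^ (1 - α)) (B' := fun x => -(K * (1 - α)) * (1 - x) ^ (1 - α - 1))
    (fun x hx => (hf x (hsub hx)).continuousWithinAt.mono hsub) ?_ hKa ?_ ?_ ?_
    (right_mem_Icc.2 hy.1)
  · intro x hx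
    have hx' := hsub (Ico_subset_Icc_self hx)
    refine (hf x hx').mono_of_mem_nhdsWithin ?_
    exact mem_of_superset (Ico_mem_nhdsGE hx'.2) (Ico_subset_Ico_left hx'.1)
  · intro x hx
    exact (hasDerivAt_barrier K _ (hsub hx).2).continuousAt.continuousWithinAt
  · intro x hx
    exact (hasDerivAt_barrier K _ (hsub (Ico_subset_Icc_self hx)).2).hasDerivWithinAt
  · intro x hx hfx
    have hx' := hsub (Ico_subset_Icc_self hx)
    have hpos : 0 < 1 - x := by linarith [hx'.2]
    have hp : 0 < (1 - x) ^ (-α) := Real.rpow_pos_of_pos hpos _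
    have h1 := (abs_le.1 (hbound x hx')).2
    have e1 : (1 - x) ^ (1 - α) = (1 - x) * (1 - x) ^ (-α) := by
      rw [sub_eq_add_neg 1 α, Real.rpow_add hpos, Real.rpow_one]
    have e2 : h x / (1 - x) * f x = h x * (K * (1 - x) ^ (-α)) := by
      rw [hfx]
      simp only [e1]
      field_simp
    have h2 := mul_le_mul_of_nonneg_right (hh x hx') (mul_nonneg hK0 hp.le)
    have h3 := mul_lt_mul_of_pos_right hK hp
    have e3 : 1 - α - 1 = -α := by ring
    simp only [e3]
    rw [e2] at h1
    linarith

/-- A differential inequality `|f' + h/(1-x) f| ≤ C (1-x)^{-α}` with `h` not too negative forces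
`f = O((1-x)^{1-α})`. -/
lemma abs_le_barrier {f f' h : ℝ → ℝ} {C α a : ℝ} (hα : 1 < α) (ha : a < 1)
    (hf : ∀ x ∈ Ico a 1, HasDerivWithinAt f (f' x) (Ico a 1) x)
    (hh : ∀ x ∈ Ico a 1, -((α - 1) / 2) ≤ h x)
    (hbound : ∀ x ∈ Ico a 1, |f' x + (h x / (1 - x)) * f x| ≤ C * (1 - x) ^ (-α)) :
    ∃ K, 0 ≤ K ∧ ∀ x ∈ Ico a 1, |f x| ≤ K * (1 - x) ^ (1 - α) := by
  have hp : 0 < (1 - a) ^ (1 - α) := Real.rpow_pos_of_pos (by linarith) _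
  obtain ⟨K, hK⟩ := exists_gt (max (max 0 (C / ((α - 1) / 2))) (|f a| / (1 - a) ^ (1 - α)))
  simp only [max_lt_iff] at hK
  obtain ⟨⟨hK0, hK1⟩, hK2⟩ := hK
  rw [div_lt_iff₀ (by linarith)] at hK1
  rw [div_lt_iff₀ hp] at hK2
  refine ⟨K, hK0.le, fun x hx => abs_le'.2 ⟨?_, ?_⟩⟩
  · exact le_barrier hf hh hbound hK0.le hK1 ((le_abs_self _).trans hK2.le) x hx
  · refine le_barrier (f := fun x => -f x) (f' := fun x => -f' x) (h := h)
      (fun x hx => (hf x hx).fun_neg) hh (fun x hx => ?_)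
      hK0.le hK1 ((neg_le_abs _).trans hK2.le) x hx
    rw [← abs_neg]
    convert hbound x hx using 2
    ring

/-- Let `F` be `C²` and `h` be `C¹` on `[1/2,1)`, with `h` extending
continuously to `[1/2,1]` and `h(1) ≥ 0`. If `|F'' + (h/(1-x))F'| ≤ C(1-x)^{-α}` on `[1/2,1)`
with `α > 1`, then : (1) if `α > 2`, `F(x) = O((1-x)^{-α+1})` as `x → 1⁻`; (2) if `1 < α < 2`,
`F` has a finite limit as `x → 1⁻`. -/
theorem stmt5 (F F' F'' h h' : ℝ → ℝ) (C α : ℝ) (hC : 0 < C) (hα : 1 < α)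
    (hF' : ∀ x ∈ Ico (1/2 : ℝ) 1, HasDerivWithinAt F (F' x) (Ico (1/2 : ℝ) 1) x)
    (hF'' : ∀ x ∈ Ico (1/2 : ℝ) 1, HasDerivWithinAt F' (F'' x) (Ico (1/2 : ℝ) 1) x)
    (hF''c : ContinuousOn F'' (Ico (1/2 : ℝ) 1))
    (hh' : ∀ x ∈ Ico (1/2 : ℝ) 1, HasDerivWithinAt h (h' x) (Ico (1/2 : ℝ) 1) x)
    (hh'c : ContinuousOn h' (Ico (1/2 : ℝ) 1))
    (hhc : ContinuousOn h (Icc (1/2 : ℝ) 1)) (hh1 : 0 ≤ h 1)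
    (hbound : ∀ x ∈ Ico (1/2 : ℝ) 1, |F'' x + (h x / (1 - x)) * F' x| ≤ C * (1 - x) ^ (-α)) :
    (2 < α → ∃ C₂ : ℝ, ∀ᶠ x in 𝓝[Ico (1/2 : ℝ) 1] 1, |F x| ≤ C₂ * (1 - x) ^ (-α + 1)) ∧
    (α < 2 → ∃ L : ℝ, Tendsto F (𝓝[Ico (1/2 : ℝ) 1] 1) (𝓝 L)) := by
  have hev : ∀ᶠ x in 𝓝[<] (1 : ℝ), -((α - 1) / 2) < h x := by
    have hc : Tendsto h (𝓝[Icc (1/2 : ℝ) 1] 1) (𝓝 (h 1)) := hhc 1 ⟨by norm_num, le_rfl⟩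
    have hc' : Tendsto h (𝓝[<] (1 : ℝ)) (𝓝 (h 1)) := by
      rw [← nhdsWithin_Ico_eq_nhdsLT (show (1/2 : ℝ) < 1 by norm_num)]
      exact hc.mono_left (nhdsWithin_mono _ Ico_subset_Icc_self)
    exact hc'.eventually (lt_mem_nhds (by linarith))
  obtain ⟨a, ha, hha⟩ : ∃ a ∈ Ico (1/2 : ℝ) 1, Ico a 1 ⊆ {x | -((α - 1) / 2) < h x} := by
    obtain ⟨l, hl, hls⟩ := mem_nhdsLT_iff_exists_Ico_subset.1 hev
    exact ⟨max (1/2) l, ⟨le_max_left _ _, max_lt (by norm_num) hl⟩,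
      (Ico_subset_Ico_left (le_max_right _ _)).trans hls⟩
  have hsub : Ico a 1 ⊆ Ico (1/2 : ℝ) 1 := Ico_subset_Ico_left ha.1
  obtain ⟨K, hK0, hK⟩ := abs_le_barrier hα ha.2
    (fun x hx => (hF'' x (hsub hx)).mono hsub) (fun x hx => (hha hx).le)
    (fun x hx => hbound x (hsub hx))
  rw [nhdsWithin_Ico_eq_nhdsLT (show (1/2 : ℝ) < 1 by norm_num)]
  have hnear : Ico a 1 ∈ 𝓝[<] (1 : ℝ) := Ico_mem_nhdsLT ha.2
  constructor
  · intro _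
    obtain ⟨K₂, -, hK₂⟩ := abs_le_barrier (f := F) (f' := F') (h := fun _ => 0) (C := K) hα ha.2
      (fun x hx => (hF' x (hsub hx)).mono hsub) (fun x _ => by linarith) (fun x hx => by
        have h1 : 0 < 1 - x := by linarith [hx.2]
        have h2 : 1 - x ≤ 1 := by linarith [(hsub hx).1]
        simp only [zero_div, zero_mul, add_zero]
        exact (hK x hx).trans (mul_le_mul_of_nonneg_left
          (Real.rpow_le_rpow_of_exponent_ge h1 h2 (by linarith)) hK0))
    refine ⟨K₂, ?_⟩
    filter_upwards [hnear] with x hx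
    rw [neg_add_eq_sub]
    exact hK₂ x hx
  · intro hα2
    set P : ℝ → ℝ := fun x => -(K / (2 - α)) * (1 - x) ^ (2 - α) with hP
    have hPd : ∀ x < 1, HasDerivAt P (K * (1 - x) ^ (1 - α)) x := by
      intro x hx
      convert hasDerivAt_barrier (-(K / (2 - α))) (2 - α) hx using 1
      have : 2 - α ≠ 0 := by linarith
      rw [show 2 - α - 1 = 1 - α by ring]
      field_simp
    have hFd : ∀ x ∈ Ioo a 1, HasDerivAt F (F' x) x := fun x hx =>
      (hF' x (hsub ⟨hx.1.le, hx.2⟩)).hasDerivAt (Ico_mem_nhds (ha.1.trans_lt hx.1) hx.2)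
    have hFc : ContinuousOn F (Ico a 1) := fun x hx =>
      (hF' x (hsub hx)).continuousWithinAt.mono hsub
    have hPc : ContinuousOn P (Ico a 1) := fun x hx => (hPd x hx.2).continuousAt.continuousWithinAt
    have hmono : MonotoneOn (fun x => F x + P x) (Ico a 1) := by
      refine monotoneOn_of_hasDerivWithinAt_nonneg (convex_Ico a 1) (hFc.add hPc)
        (f' := fun x => F' x + K * (1 - x) ^ (1 - α)) ?_ ?_ <;> rw [interior_Ico] <;> intro x hx
      · exact ((hFd x hx).add (hPd x hx.2)).hasDerivWithinAt
      · linarith [(abs_le.1 (hK x ⟨hx.1.le, hx.2⟩)).1]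
    have hanti : AntitoneOn (fun x => F x - P x) (Ico a 1) := by
      refine antitoneOn_of_hasDerivWithinAt_nonpos (convex_Ico a 1) (hFc.sub hPc)
        (f' := fun x => F' x - K * (1 - x) ^ (1 - α)) ?_ ?_ <;> rw [interior_Ico] <;> intro x hx
      · exact ((hFd x hx).sub (hPd x hx.2)).hasDerivWithinAt
      · linarith [(abs_le.1 (hK x ⟨hx.1.le, hx.2⟩)).2]
    have hbdd : BddAbove ((fun x => F x + P x) '' Ioo a 1) := by
      refine ⟨F a - P a, ?_⟩
      rintro _ ⟨x, hx, rfl⟩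
      have h1 : F x - P x ≤ F a - P a := hanti ⟨le_rfl, ha.2⟩ ⟨hx.1.le, hx.2⟩ hx.1.le
      have h2 : P x ≤ 0 := by
        have h3 : 0 ≤ K / (2 - α) := div_nonneg hK0 (by linarith)
        have h4 : 0 ≤ (1 - x) ^ (2 - α) := Real.rpow_nonneg (by linarith [hx.2]) _
        have h5 := mul_nonneg h3 h4
        simp only [hP]
        linarith
      change F x + P x ≤ _
      linarith
    have hlim := (hmono.mono Ioo_subset_Ico_self).tendsto_nhdsWithin_Ioo_left
      (nonempty_Ioo.2 ha.2) hbdd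
    have hP0 : Tendsto P (𝓝[<] (1 : ℝ)) (𝓝 0) := by
      have h1 : ContinuousAt P 1 := by
        refine continuousAt_const.mul ?_
        exact (continuousAt_const.sub continuousAt_id).rpow_const (Or.inr (by linarith))
      have h2 : P 1 = 0 := by
        simp [hP, Real.zero_rpow (show 2 - α ≠ 0 by linarith)]
      rw [← h2]
      exact h1.tendsto.mono_left nhdsWithin_le_nhds
    exact ⟨_, (hlim.sub hP0).congr fun x => by ring⟩
end
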